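/- Assume Schanuel's Conjecture. If f and g are two exponential polynomials in the ring 𝓔 having infinitely many common zeros in ℂ, then there exists an exponential polynomial h ∈ 𝓔 such that h divides both f and g in the ring 𝓔 and h has infinitely many zeros in ℂ. (Shapiro's Conjecture.) -/

import Mathlib

open Complex Set

noncomputable section

/-- `f` is an exponential polynomial, i.e. an element of the ring `𝓔`. -/
def IsExpPoly (f : ℂ → ℂ) : Prop :=
  ∃ (N : ℕ) (lam mu : Fin N → ℂ),
    ∀ z : ℂ, f z = ∑ i, lam i * Complex.exp (mu i * z)

/-- `h` divides `f` in the ring `𝓔`. -/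
def EDvd (h f : ℂ → ℂ) : Prop :=
  ∃ q : ℂ → ℂ, IsExpPoly q ∧ f = h * q

/-- `f` is a unit of the ring `𝓔`. -/
def EUnit (f : ℂ → ℂ) : Prop :=
  IsExpPoly f ∧ ∃ g : ℂ → ℂ, IsExpPoly g ∧ f * g = 1

/-- `f` is irreducible in the ring `𝓔`. -/
def EIrreducible (f : ℂ → ℂ) : Prop :=
  IsExpPoly f ∧ f ≠ 0 ∧ ¬ EUnit f ∧
    ∀ g h : ℂ → ℂ, IsExpPoly g → IsExpPoly h → f = g * h → EUnit g ∨ EUnit h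

/-- canonical representation: pairwise distinct exponents, nonzero coefficients. -/
def IsCanonicalRep (f : ℂ → ℂ) {N : ℕ} (lam mu : Fin N → ℂ) : Prop :=
  (∀ i, lam i ≠ 0) ∧ Function.Injective mu ∧
    ∀ z : ℂ, f z = ∑ i, lam i * Complex.exp (mu i * z)

/-- `f` is a simple exponential polynomial: its support has `ℚ`-dimension 1. -/
def IsSimple (f : ℂ → ℂ) : Prop :=
  ∃ (N : ℕ) (lam mu : Fin N → ℂ), IsCanonicalRep f lam mu ∧
    Module.finrank ℚ (Submodule.span ℚ (Set.range mu)) = 1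

/-- Transcendence degree over `ℚ` of (the field generated by) a set of complex numbers. -/
noncomputable def trdegQ (s : Set ℂ) : Cardinal.{0} :=
  ⨆ t : {t : Finset ℂ // ↑t ⊆ s ∧ AlgebraicIndependent ℚ (Subtype.val : {x : ℂ // x ∈ t} → ℂ)},
    (t.1.card : Cardinal)

/-- Schanuel's Conjecture. -/
def SchanuelConjecture : Prop :=
  ∀ (n : ℕ) (lam : Fin n → ℂ), LinearIndependent ℚ lam →
    (n : Cardinal) ≤ trdegQ (Set.range lam ∪ Set.range fun i => Complex.exp (lam i))


theorem exists_derivation_ne_zero (x : ℂ) (hx : Transcendental ℚ x) :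
    ∃ D : Derivation ℚ ℂ ℂ, D x ≠ 0 := by
  have h1 : AlgebraicIndepOn ℚ _root_.id ({x} : Set ℂ) := by
    have : AlgebraicIndependent ℚ (fun i : ({x} : Set ℂ) => (i : ℂ)) := by
      have : Unique ({x} : Set ℂ) := Set.uniqueSingleton x
      rw [algebraicIndependent_unique_type_iff]
      have hd : ((default : ({x} : Set ℂ)) : ℂ) = x := (default : ({x} : Set ℂ)).2
      rw [hd]; exact hx
    exact this
  obtain ⟨t, hxt, ht⟩ := exists_isTranscendenceBasis_superset h1
  have hxt : x ∈ t := hxt rfl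
  let S := MvPolynomial t ℚ
  let : Algebra S ℂ := (MvPolynomial.aeval (Subtype.val : t → ℂ)).toAlgebra
  have hmap : ∀ s : S, algebraMap S ℂ s = MvPolynomial.aeval (Subtype.val : t → ℂ) s := fun s => rfl
  have : IsScalarTower ℚ S ℂ := IsScalarTower.of_algebraMap_eq (fun r => by
    rw [hmap, AlgHom.commutes])
  have hinj : Function.Injective (algebraMap S ℂ) := ht.1
  have : FaithfulSMul S ℂ := (faithfulSMul_iff_algebraMap_injective S ℂ).2 hinj
  let F := FractionRing S
  let : Algebra F ℂ := FractionRing.liftAlgebra S ℂ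
  have : IsScalarTower S F ℂ := FractionRing.isScalarTower_liftAlgebra S ℂ
  have halgS : Algebra.IsAlgebraic S ℂ := by
    have := ht.isAlgebraic
    constructor
    intro y
    obtain ⟨p, hp0, hp⟩ := this.isAlgebraic y
    let e := ht.1.aevalEquiv
    refine ⟨p.map e.symm.toRingEquiv.toRingHom, ?_, ?_⟩
    · rwa [Ne, Polynomial.map_eq_zero_iff]
      exact e.symm.injective
    · rw [Polynomial.aeval_def, Polynomial.eval₂_map]
      rw [Polynomial.aeval_def] at hp
      rw [← hp]
      refine congrArg (fun φ => Polynomial.eval₂ φ y p) ?_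
      refine RingHom.ext fun z => ?_
      have h5 := ht.1.algebraMap_aevalEquiv (e.symm z)
      have h6 : ht.1.aevalEquiv (e.symm z) = z := e.apply_symm_apply z
      rw [h6] at h5
      exact h5.symm
  have : Algebra.IsAlgebraic F ℂ := (IsFractionRing.comap_isAlgebraic_iff (A := S) (K := F) (C := ℂ)).1 halgS
  have : Algebra.FormallyEtale S F := Algebra.FormallyEtale.of_isLocalization (nonZeroDivisors S)
  have : CharZero F := charZero_of_injective_algebraMap (IsFractionRing.injective S F)
  have : Algebra.FormallyEtale F ℂ := Algebra.FormallyEtale.of_isSeparable F ℂ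
  have : Algebra.FormallyEtale S ℂ := Algebra.FormallyEtale.comp S F ℂ
  let e := KaehlerDifferential.tensorKaehlerEquivOfFormallyEtale ℚ S ℂ
  let b := (KaehlerDifferential.mvPolynomialBasis ℚ t)
  let b' := b.baseChange ℂ
  let D : Derivation ℚ ℂ ℂ :=
    ((b'.coord ⟨x, hxt⟩).comp e.symm.toLinearMap).compDer (KaehlerDifferential.D ℚ ℂ)
  refine ⟨D, ?_⟩
  have h2 : x = algebraMap S ℂ (MvPolynomial.X ⟨x, hxt⟩) := by simp [hmap]
  have h3 : e.symm (KaehlerDifferential.D ℚ ℂ x) = b' ⟨x, hxt⟩ := by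
    conv_lhs => rw [h2]
    rw [KaehlerDifferential.tensorKaehlerEquivOfFormallyEtale_symm_D_algebraMap]
    simp only [b', Module.Basis.baseChange_apply, b]
    congr 1
    rw [KaehlerDifferential.mvPolynomialBasis_apply]
  have h4 : D x = 1 := by
    change b'.coord ⟨x, hxt⟩ (e.symm (KaehlerDifferential.D ℚ ℂ x)) = 1
    rw [h3]; simp
  rw [h4]; exact one_ne_zero


def kerD (D : Derivation ℚ ℂ ℂ) : Subfield ℂ where
  carrier := {x | D x = 0}
  mul_mem' := by
    intro a b ha hb
    simp only [Set.mem_setOf_eq] at *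
    simp [ha, hb]
  one_mem' := by simp
  add_mem' := by
    intro a b ha hb
    simp only [Set.mem_setOf_eq] at *
    simp [ha, hb]
  zero_mem' := by simp
  neg_mem' := by
    intro a ha
    simp only [Set.mem_setOf_eq] at *
    simp [ha]
  inv_mem' := by
    intro a ha
    simp only [Set.mem_setOf_eq] at *
    rw [Derivation.leibniz_inv, ha]; simp

theorem mem_kerD {D : Derivation ℚ ℂ ℂ} {x : ℂ} : x ∈ kerD D ↔ D x = 0 := Iff.rfl

def linD (D : Derivation ℚ ℂ ℂ) : ℂ →ₗ[kerD D] ℂ where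
  toFun := D
  map_add' := by simp
  map_smul' := by
    intro c x
    have hc : D c = 0 := c.2
    change D ((c : ℂ) * x) = (c : ℂ) * D x
    simp [hc]

@[simp] theorem linD_apply (D : Derivation ℚ ℂ ℂ) (x : ℂ) : linD D x = D x := rfl

theorem kerD_alg (D : Derivation ℚ ℂ ℂ) (x : ℂ) (hx : IsAlgebraic (kerD D) x) : x ∈ kerD D := by
  have hi : IsIntegral (kerD D) x := hx.isIntegral
  set p := minpoly (kerD D) x with hp
  have h0 : Polynomial.aeval x p = 0 := minpoly.aeval _ _
  have hsep : p.Separable := (minpoly.irreducible hi).separable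
  have key : ∀ q : Polynomial (kerD D), D (Polynomial.aeval x q) =
      Polynomial.aeval x (Polynomial.derivative q) * D x := by
    intro q
    induction q using Polynomial.induction_on' with
    | add p q hp hq => simp only [map_add, hp, hq]; ring
    | monomial n a =>
      have ha : D (a : ℂ) = 0 := a.2
      rw [Polynomial.aeval_monomial, Polynomial.derivative_monomial, Polynomial.aeval_monomial]
      change D ((a : ℂ) * x ^ n) = ((a * (n : kerD D) : kerD D) : ℂ) * _ * _
      rw [Derivation.leibniz, ha, Derivation.leibniz_pow]
      simp
      ring
  have h1 := key p
  rw [h0, map_zero] at h1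
  have h2 : Polynomial.aeval x (Polynomial.derivative p) ≠ 0 := hsep.aeval_derivative_ne_zero h0
  rcases mul_eq_zero.1 h1.symm with h | h
  · exact absurd h h2
  · exact h

/-- logarithmic derivative of exp along `D`. -/
def dlog (D : Derivation ℚ ℂ ℂ) : ℂ →ₗ[ℚ] ℂ :=
  AddMonoidHom.toRatLinearMap
    { toFun := fun w => D (Complex.exp w) * Complex.exp (-w)
      map_zero' := by simp
      map_add' := by
        intro a b
        rw [Complex.exp_add, Derivation.leibniz, neg_add, Complex.exp_add]
        simp only [smul_eq_mul, Complex.exp_neg]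
        field_simp [Complex.exp_ne_zero]
        ring }

theorem dlog_apply (D : Derivation ℚ ℂ ℂ) (w : ℂ) :
    dlog D w = D (Complex.exp w) * Complex.exp (-w) := rfl

theorem dlog_eq (D : Derivation ℚ ℂ ℂ) (w : ℂ) :
    dlog D w = D (Complex.exp w) / Complex.exp w := by
  rw [dlog_apply, Complex.exp_neg, div_eq_mul_inv]

theorem dlog_eq_zero {D : Derivation ℚ ℂ ℂ} {w : ℂ} : dlog D w = 0 ↔ Complex.exp w ∈ kerD D := by
  rw [dlog_apply, mem_kerD]
  simp [Complex.exp_ne_zero]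

theorem valuation_finite (K : Subfield ℂ) (A : ValuationSubring ℂ) (hKA : ∀ x ∈ K, x ∈ A)
    (G : Submodule K ℂ) (hG : G.FG) :
    {γ | ∃ x ∈ G, x ≠ 0 ∧ A.valuation x = γ}.Finite := by
  have hc1 : ∀ c : K, c ≠ 0 → A.valuation (c : ℂ) = 1 := by
    intro c hc
    apply le_antisymm
    · exact (A.valuation_le_one_iff _).2 (hKA _ c.2)
    · have : A.valuation ((c : ℂ)⁻¹) ≤ 1 := (A.valuation_le_one_iff _).2 (hKA _ (K.inv_mem c.2))
      rw [map_inv₀] at this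
      have h0 : A.valuation (c : ℂ) ≠ 0 := by
        rw [Valuation.ne_zero_iff]; exact_mod_cast hc
      exact (inv_le_one₀ (zero_lt_iff.2 h0)).1 this
  have hfd : FiniteDimensional K G := (Submodule.fg_iff_finiteDimensional G).1 hG
  by_contra hinf
  have hinf : {γ | ∃ x ∈ G, x ≠ 0 ∧ A.valuation x = γ}.Infinite := hinf
  obtain ⟨t, ht, hcard⟩ := hinf.exists_subset_card_eq (Module.finrank K G + 1)
  have hch : ∀ γ : t, ∃ x : G, (x : ℂ) ≠ 0 ∧ A.valuation (x : ℂ) = γ := by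
    intro γ
    obtain ⟨x, hx, h0, hv⟩ := ht γ.2
    exact ⟨⟨x, hx⟩, h0, hv⟩
  choose x hx0 hxv using hch
  have hli : LinearIndependent K x := by
    rw [Fintype.linearIndependent_iff]
    intro c hsum
    by_contra! hne
    obtain ⟨i, hi⟩ := hne
    let s := Finset.univ.filter (fun i => c i ≠ 0)
    have hs : s.Nonempty := ⟨i, by simp [s, hi]⟩
    obtain ⟨m, hm, hmax⟩ := s.exists_max_image (fun i : t => (i : A.ValueGroup)) hs
    have hsum' : ∑ i ∈ s, (c i : ℂ) * (x i : ℂ) = 0 := by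
      have h1 := congrArg (Subtype.val : G → ℂ) hsum
      have h2 : ((∑ i, c i • x i : G) : ℂ) = ∑ i, (c i : ℂ) * (x i : ℂ) := by
        rw [Submodule.coe_sum]; rfl
      rw [h2] at h1
      refine Eq.trans ?_ h1
      rw [Finset.sum_filter_of_ne]
      intro j _ hj hcj
      apply hj; simp [hcj]
    rw [← Finset.add_sum_erase s _ hm] at hsum'
    have hv : A.valuation (∑ i ∈ s.erase m, (c i : ℂ) * (x i : ℂ)) < (m : A.ValueGroup) := by
      apply Valuation.map_sum_lt
      · rw [← hxv m, Valuation.ne_zero_iff]; exact hx0 m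
      · intro j hj
        have hjs := Finset.mem_of_mem_erase hj
        rw [map_mul, hc1 _ (by simpa [s] using hjs), one_mul, hxv]
        exact lt_of_le_of_ne (hmax j hjs) (fun h => (Finset.ne_of_mem_erase hj) (Subtype.ext h))
    have hv2 : A.valuation ((c m : ℂ) * (x m : ℂ)) = m := by
      rw [map_mul, hc1 _ (by simpa [s] using hm), one_mul, hxv]
    have : (c m : ℂ) * (x m : ℂ) = -∑ i ∈ s.erase m, (c i : ℂ) * (x i : ℂ) := eq_neg_of_add_eq_zero_left hsum'
    rw [this, Valuation.map_neg] at hv2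
    exact absurd hv2 hv.ne
  have := hli.fintype_card_le_finrank
  rw [Fintype.card_coe, hcard] at this
  omega

theorem exists_infinite_const {α β : Type*} {S : Set α} (hS : S.Infinite) (f : α → β)
    (hf : (f '' S).Finite) : ∃ S' ⊆ S, S'.Infinite ∧ ∃ b, ∀ z ∈ S', f z = b := by
  by_contra! hcon
  apply hS
  have : S ⊆ ⋃ b ∈ f '' S, (S ∩ f ⁻¹' {b}) := by
    intro z hz
    simp only [Set.mem_iUnion]
    exact ⟨f z, ⟨z, hz, rfl⟩, hz, rfl⟩
  refine Set.Finite.subset (hf.biUnion ?_) this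
  intro b _
  by_contra hinf
  obtain ⟨z, hz, hne⟩ := hcon (S ∩ f ⁻¹' {b}) Set.inter_subset_left hinf b
  exact hne hz.2

theorem lemB (K : Subfield ℂ) (hK : ∀ x : ℂ, IsAlgebraic K x → x ∈ K) : ∀ (n : ℕ) (W : Submodule ℚ ℂ)
    [FiniteDimensional ℚ W] (_ : Module.finrank ℚ W = n) (S : Set ℂ) (_ : S.Infinite) (ψ : ℂ → ℂ)
    (_ : ∀ z ∈ S, ∀ z' ∈ S, ψ z - ψ z' ∈ W)
    (_ : ∀ A : ValuationSubring ℂ, (∀ x ∈ K, x ∈ A) →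
      ((fun z => A.valuation (Complex.exp (ψ z))) '' S).Finite),
    ∃ S' ⊆ S, S'.Infinite ∧ ∀ z ∈ S', ∀ z' ∈ S', Complex.exp (ψ z - ψ z') ∈ K := by
  intro n
  induction n using Nat.strong_induction_on with
  | _ n ih =>
  intro W _ hn S hS ψ hψ hA
  by_cases hall : ∀ w ∈ W, Complex.exp w ∈ K
  · exact ⟨S, le_rfl, hS, fun z hz z' hz' => hall _ (hψ z hz z' hz')⟩
  push Not at hall
  obtain ⟨w, hw, hwK⟩ := hall
  have hic : IsIntegrallyClosedIn K.toSubring ℂ := by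
    rw [isIntegrallyClosedIn_iff]
    refine ⟨Subtype.val_injective, ?_⟩
    intro x hx
    have hx' : IsIntegral K x := hx
    exact ⟨⟨x, hK x hx'.isAlgebraic⟩, rfl⟩
  obtain ⟨A, hAK, hwA⟩ := Subring.exists_le_valuationSubring_of_isIntegrallyClosedIn (R := K.toSubring) hwK
  obtain ⟨S1, hS1, hS1inf, b, hb⟩ := exists_infinite_const hS _ (hA A (fun x hx => hAK hx))
  let W1 : Submodule ℚ ℂ :=
    { carrier := {w | w ∈ W ∧ A.valuation (Complex.exp w) = 1}
      zero_mem' := by simp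
      add_mem' := by
        rintro a c ⟨ha, ha'⟩ ⟨hc, hc'⟩
        exact ⟨W.add_mem ha hc, by rw [Complex.exp_add, map_mul, ha', hc', one_mul]⟩
      smul_mem' := by
        rintro q a ⟨ha, ha'⟩
        refine ⟨W.smul_mem q ha, ?_⟩
        have h1 : (Complex.exp (q • a)) ^ q.den = (Complex.exp a) ^ q.num := by
          rw [← Complex.exp_nat_mul, ← Complex.exp_int_mul]
          congr 1
          rw [Rat.smul_def, ← mul_assoc]
          congr 1
          have := Rat.den_mul_eq_num q
          exact_mod_cast congrArg (fun x : ℚ => (x : ℂ)) this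
        have h2 := congrArg A.valuation h1
        rw [map_pow, map_zpow₀, ha', one_zpow] at h2
        exact (pow_eq_one_iff.1 h2).resolve_right q.den_nz }
  have hlt : W1 < W := by
    refine lt_of_le_of_ne (fun x hx => hx.1) ?_
    intro h
    have : w ∈ W1 := h ▸ hw
    apply hwA
    exact (A.valuation_le_one_iff _).1 this.2.le
  have : FiniteDimensional ℚ W1 := Submodule.finiteDimensional_of_le hlt.le
  obtain ⟨S', hS', hinf', h'⟩ := ih (Module.finrank ℚ W1) (hn ▸ Submodule.finrank_lt_finrank_of_lt hlt) W1 rfl S1 hS1inf ψ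
    (by
      intro z hz z' hz'
      refine ⟨hψ z (hS1 hz) z' (hS1 hz'), ?_⟩
      rw [Complex.exp_sub, map_div₀, hb z hz, hb z' hz']
      apply div_self
      rw [← hb z hz, Valuation.ne_zero_iff]; exact Complex.exp_ne_zero _)
    (by
      intro A' hA'
      exact (hA A' hA').subset (Set.image_mono hS1))
  exact ⟨S', hS'.trans hS1, hinf', h'⟩


theorem wronsk_aux (D : Derivation ℚ ℂ ℂ) {ι : Type*} (y : ι → ℂ) (hy : LinearIndependent (kerD D) y) :
    ∀ (n : ℕ) (s : Finset ι) (_ : s.card ≤ n) (c : ι → ℂ) (_ : ∀ a < n, ∑ p ∈ s, c p * D^[a] (y p) = 0),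
      ∀ p ∈ s, c p = 0 := by
  intro n
  induction n with
  | zero =>
    intro s hs c _ p hp
    have : s = ∅ := by simpa using hs
    simp [this] at hp
  | succ n ih =>
    classical
    intro s hs c hc
    by_contra! hne
    obtain ⟨p0, hp0, hcp0⟩ := hne
    set c' : ι → ℂ := fun p => c p / c p0 with hc'
    have hc1 : ∀ a < n + 1, ∑ p ∈ s, c' p * D^[a] (y p) = 0 := by
      intro a ha
      have := hc a ha
      have h2 : ∑ p ∈ s, c' p * D^[a] (y p) = (∑ p ∈ s, c p * D^[a] (y p)) / c p0 := by
        rw [Finset.sum_div]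
        refine Finset.sum_congr rfl fun p _ => ?_
        simp only [hc']; ring
      rw [h2, this, zero_div]
    have hc2 : ∀ a < n, ∑ p ∈ s.erase p0, D (c' p) * D^[a] (y p) = 0 := by
      intro a ha
      have h1 := congrArg D (hc1 a (by omega))
      rw [map_zero, map_sum] at h1
      have h2 := hc1 (a + 1) (by omega)
      simp only [Derivation.leibniz, smul_eq_mul, Finset.sum_add_distrib, ← Function.iterate_succ_apply'] at h1
      rw [show ∑ p ∈ s, c' p * D^[a.succ] (y p) = 0 from h2, zero_add] at h1
      rw [← Finset.add_sum_erase s _ hp0] at h1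
      have h3 : D (c' p0) = 0 := by
        have : c' p0 = 1 := by simp [hc', hcp0]
        rw [this]; simp
      rw [h3, mul_zero, zero_add] at h1
      rw [← h1]
      exact Finset.sum_congr rfl fun p _ => mul_comm _ _
    have h4 := ih (s.erase p0) (by rw [Finset.card_erase_of_mem hp0]; omega) (fun p => D (c' p)) hc2
    have h5 : ∀ p ∈ s, D (c' p) = 0 := by
      intro p hp
      by_cases h : p = p0
      · subst h
        have : c' p = 1 := by simp [hc', hcp0]
        rw [this]; simp
      · exact h4 p (Finset.mem_erase.2 ⟨h, hp⟩)
    have h6 := hc1 0 (by omega)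
    rw [linearIndependent_iff'] at hy
    let g : ι → kerD D := fun p => if hp : p ∈ s then ⟨c' p, h5 p hp⟩ else 0
    have h7 := hy s g (by
      rw [← h6]
      refine Finset.sum_congr rfl fun p hp => ?_
      simp only [g, dif_pos hp]
      rfl) p0 hp0
    simp only [g, dif_pos hp0] at h7
    have h8 : c' p0 = 0 := congrArg (Subtype.val) h7
    simp [hc', hcp0] at h8

def Gseq (D : Derivation ℚ ℂ ℂ) (L : Submodule (kerD D) ℂ) : ℕ → Submodule (kerD D) ℂ
  | 0 => 1
  | n + 1 => (Gseq D L n).map (linD D) ⊔ Gseq D L n * L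

theorem Gseq_fg (D : Derivation ℚ ℂ ℂ) (L : Submodule (kerD D) ℂ) (hL : L.FG) (n : ℕ) :
    (Gseq D L n).FG := by
  induction n with
  | zero =>
    change (1 : Submodule (kerD D) ℂ).FG
    rw [Submodule.one_eq_span]; exact Submodule.fg_span_singleton _
  | succ n ih => exact (ih.map _).sup (ih.mul hL)

theorem Gseq_mem (D : Derivation ℚ ℂ ℂ) (L : Submodule (kerD D) ℂ) (y : ℂ) (hy : y ≠ 0)
    (hyL : D y / y ∈ L) (n : ℕ) : D^[n] y / y ∈ Gseq D L n := by
  induction n with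
  | zero =>
    simp only [Function.iterate_zero, id_eq, div_self hy, Gseq]
    exact Submodule.one_le.1 le_rfl
  | succ n ih =>
    rw [Function.iterate_succ_apply']
    set m := D^[n] y / y with hm
    have h1 : D^[n] y = m * y := by rw [hm]; field_simp
    have h2 : D (D^[n] y) / y = D m + m * (D y / y) := by
      rw [h1, Derivation.leibniz]; simp only [smul_eq_mul]; field_simp; ring
    rw [h2]
    refine Submodule.add_mem_sup ?_ ?_
    · exact ⟨m, ih, rfl⟩
    · exact Submodule.mul_mem_mul ih hyL

theorem Submodule_prod_mem_pow {K : Type*} [CommSemiring K] {A : Type*} [CommSemiring A] [Algebra K A]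
    (G : Submodule K A) {ι : Type*} (s : Finset ι) (f : ι → A) (hf : ∀ i ∈ s, f i ∈ G) :
    ∏ i ∈ s, f i ∈ G ^ s.card := by
  classical
  induction s using Finset.induction_on with
  | empty => simp [Submodule.one_le.1 le_rfl]
  | insert a s ha ih =>
    rw [Finset.prod_insert ha, Finset.card_insert_of_notMem ha, pow_succ']
    exact Submodule.mul_mem_mul (hf a (by simp)) (ih fun i hi => hf i (by simp [hi]))

theorem det_mem_pow {K : Type*} [CommRing K] {A : Type*} [CommRing A] [Algebra K A]
    (G : Submodule K A) {n : ℕ} (M : Matrix (Fin n) (Fin n) A) (hM : ∀ i j, M i j ∈ G) :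
    M.det ∈ G ^ n := by
  rw [Matrix.det_apply]
  refine Submodule.sum_mem _ fun σ _ => ?_
  have h : ∏ i, M (σ i) i ∈ G ^ n := by
    have := Submodule_prod_mem_pow G Finset.univ (fun i => M (σ i) i) (fun i _ => hM _ _)
    simpa using this
  rcases Int.units_eq_one_or (Equiv.Perm.sign σ) with hs | hs
  · rw [hs, one_smul]; exact h
  · rw [hs, Units.neg_smul, one_smul]; exact Submodule.neg_mem _ h

theorem lemC (D : Derivation ℚ ℂ ℂ) (L : Submodule (kerD D) ℂ) (hL : L.FG) (n : ℕ) :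
    ∃ G : Submodule (kerD D) ℂ, G.FG ∧ ∀ y : Fin n → ℂ, (∀ p, y p ≠ 0) → (∀ p, D (y p) / y p ∈ L) →
      ∑ p, y p = 1 → LinearIndependent (kerD D) y → ∀ p, ∃ u ∈ G, ∃ v ∈ G, u ≠ 0 ∧ v ≠ 0 ∧ y p = u / v := by
  let G0 : Submodule (kerD D) ℂ := ⨆ a ∈ Finset.range (n + 1), Gseq D L a
  have hG0 : G0.FG := Submodule.fg_biSup _ _ fun a _ => Gseq_fg D L hL a
  have hle : ∀ a ≤ n, Gseq D L a ≤ G0 := fun a ha =>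
    le_iSup₂_of_le a (Finset.mem_range.2 (by omega)) le_rfl
  refine ⟨G0 ^ n, hG0.pow n, ?_⟩
  intro y hy0 hyL hsum hli p
  let M : Matrix (Fin n) (Fin n) ℂ := fun a q => D^[(a : ℕ)] (y q) / y q
  have hM : ∀ a q, M a q ∈ G0 := fun a q => hle a a.2.le (Gseq_mem D L (y q) (hy0 q) (hyL q) a)
  have hdet : M.det ≠ 0 := by
    intro h0
    obtain ⟨v, hv0, hv⟩ := Matrix.exists_mulVec_eq_zero_iff.2 h0
    apply hv0
    have := wronsk_aux D y hli n Finset.univ (by simp) (fun q => v q / y q) (by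
      intro a ha
      have := congrFun hv ⟨a, ha⟩
      simp only [Matrix.mulVec, dotProduct, M, Pi.zero_apply] at this
      rw [← this]
      refine Finset.sum_congr rfl fun q _ => ?_
      ring)
    funext q
    have h1 := this q (Finset.mem_univ q)
    simpa [hy0 q] using h1
  have hn : 0 < n := p.pos
  let b : Fin n → ℂ := fun a => if (a : ℕ) = 0 then 1 else 0
  have hMy : M.mulVec y = b := by
    funext a
    simp only [Matrix.mulVec, dotProduct, M, b]
    have h1 : ∑ q, D^[(a : ℕ)] (y q) / y q * y q = D^[(a : ℕ)] (∑ q, y q) := by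
      have : ∀ m : ℕ, D^[m] (∑ q, y q) = ∑ q, D^[m] (y q) := by
        intro m
        induction m with
        | zero => simp
        | succ m ih => simp only [Function.iterate_succ_apply', ih, map_sum]
      rw [this]
      refine Finset.sum_congr rfl fun q _ => ?_
      have := hy0 q
      field_simp
    rw [h1, hsum]
    rcases a with ⟨a, ha⟩
    cases a with
    | zero => simp
    | succ a =>
      simp only [Function.iterate_succ_apply, Derivation.map_one_eq_zero]
      have : ∀ m : ℕ, D^[m] 0 = 0 := by
        intro m
        induction m with
        | zero => simp
        | succ m ih => simp [Function.iterate_succ_apply, ih]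
      simp [this]
  have hcr : M.det * y p = (M.updateCol p b).det := by
    rw [← Matrix.cramer_apply, ← hMy, Matrix.cramer_eq_adjugate_mulVec, Matrix.mulVec_mulVec,
      Matrix.adjugate_mul, Matrix.smul_mulVec, Matrix.one_mulVec]
    simp
  have h1 : (M.updateCol p b).det ∈ G0 ^ n := by
    apply det_mem_pow
    intro i j
    rw [Matrix.updateCol_apply]
    split_ifs with h
    · simp only [b]
      split_ifs
      · exact hle 0 (by omega) (Submodule.one_le.1 (le_refl (1 : Submodule (kerD D) ℂ)))
      · exact Submodule.zero_mem _
    · exact hM i j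
  refine ⟨_, h1, M.det, det_mem_pow _ _ hM, ?_, hdet, ?_⟩
  · rw [← hcr]; exact mul_ne_zero hdet (hy0 p)
  · rw [← hcr]; field_simp


def MinZero {ι : Type*} (B : Finset ι) (w : ι → ℂ) : Prop :=
  B.Nonempty ∧ ∑ i ∈ B, w i = 0 ∧ ∀ A ⊆ B, A.Nonempty → A ≠ B → ∑ i ∈ A, w i ≠ 0

theorem valuation_one (K : Subfield ℂ) (A : ValuationSubring ℂ) (hKA : ∀ x ∈ K, x ∈ A)
    (c : ℂ) (hcK : c ∈ K) (hc : c ≠ 0) : A.valuation c = 1 := by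
  apply le_antisymm
  · exact (A.valuation_le_one_iff _).2 (hKA _ hcK)
  · have : A.valuation (c⁻¹) ≤ 1 := (A.valuation_le_one_iff _).2 (hKA _ (K.inv_mem hcK))
    rw [map_inv₀] at this
    have h0 : A.valuation c ≠ 0 := by
      rw [Valuation.ne_zero_iff]; exact hc
    exact (inv_le_one₀ (zero_lt_iff.2 h0)).1 this

theorem minrel {K V κ : Type*} [Field K] [AddCommGroup V] [Module K V] [DecidableEq κ] (y : κ → V) :
    ∀ (n : ℕ) (T0 : Finset κ) (_ : T0.card = n) (c0 : κ → K) (_ : ∃ p ∈ T0, c0 p ≠ 0)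
    (_ : ∑ p ∈ T0, c0 p • y p = 0),
    ∃ T ⊆ T0, T.Nonempty ∧ (∃ c : κ → K, (∀ p ∈ T, c p ≠ 0) ∧ ∑ p ∈ T, c p • y p = 0) ∧
      ∀ q ∈ T, LinearIndependent K (fun p : (T.erase q : Finset κ) => y p) := by
  classical
  intro n
  induction n using Nat.strong_induction_on with
  | _ n ih =>
  intro T0 hn c0 ⟨p, hp, hcp⟩ hrel
  by_cases h : ∃ q ∈ T0, ∃ c : κ → K, (∃ p ∈ T0.erase q, c p ≠ 0) ∧ ∑ p ∈ T0.erase q, c p • y p = 0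
  · obtain ⟨q, hq, c, hc, hc'⟩ := h
    obtain ⟨T, hT, h1⟩ := ih (T0.erase q).card (by rw [← hn]; exact Finset.card_erase_lt_of_mem hq) _ rfl c hc hc'
    exact ⟨T, hT.trans (Finset.erase_subset _ _), h1⟩
  · push Not at h
    refine ⟨T0, le_rfl, ⟨p, hp⟩, ⟨c0, ?_, hrel⟩, ?_⟩
    · intro q hq hcq
      apply h q hq c0
      · refine ⟨p, Finset.mem_erase.2 ⟨?_, hp⟩, hcp⟩
        rintro rfl; exact hcp hcq
      · rw [← Finset.add_sum_erase T0 _ hq, hcq, zero_smul, zero_add] at hrel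
        exact hrel
    · intro q hq
      rw [Fintype.linearIndependent_iff]
      intro g hg i
      by_contra hgi
      let c : κ → K := fun p => if hp : p ∈ T0.erase q then g ⟨p, hp⟩ else 0
      apply h q hq c
      · exact ⟨i, i.2, by simpa [c, -Finset.mem_erase, i.2] using hgi⟩
      · rw [← hg, ← Finset.sum_coe_sort]
        refine Finset.sum_congr rfl fun j _ => ?_
        simp [c, -Finset.mem_erase, j.2]

theorem ld_mul (D : Derivation ℚ ℂ ℂ) {a b : ℂ} (ha : a ≠ 0) (hb : b ≠ 0) :
    D (a * b) / (a * b) = D a / a + D b / b := by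
  rw [Derivation.leibniz]; simp only [smul_eq_mul]; field_simp; ring

theorem ld_inv (D : Derivation ℚ ℂ ℂ) {a : ℂ} (ha : a ≠ 0) :
    D (a⁻¹) / (a⁻¹) = - (D a / a) := by
  rw [Derivation.leibniz_inv]; simp only [smul_eq_mul]; field_simp

theorem lemA0 (D : Derivation ℚ ℂ ℂ) {ι : Type*} [DecidableEq ι] (W : Submodule ℚ ℂ) [FiniteDimensional ℚ W]
    (E : Submodule (kerD D) ℂ) (hE : E.FG) (B : Finset ι) (e w : ι → ℂ → ℂ) (S : Set ℂ) (hS : S.Infinite)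
    (he : ∀ i ∈ B, ∀ z ∈ S, e i z ∈ E) (hw : ∀ i ∈ B, ∀ j ∈ B, ∀ z ∈ S, w i z - w j z ∈ W)
    (hne : ∃ i ∈ B, ∀ z ∈ S, e i z ≠ 0) (hsum : ∀ z ∈ S, ∑ i ∈ B, e i z * Complex.exp (w i z) = 0) :
    ∃ i ∈ B, ∃ j ∈ B, i ≠ j ∧ ∃ S' ⊆ S, S'.Infinite ∧ ∀ z ∈ S', ∀ z' ∈ S',
      Complex.exp ((w j z - w i z) - (w j z' - w i z')) ∈ kerD D := by
  classical
  have hfd : FiniteDimensional (kerD D) E := (Submodule.fg_iff_finiteDimensional E).1 hE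
  let bE := Module.finBasis (kerD D) E
  set m := Module.finrank (kerD D) E
  let ε : Fin m → ℂ := fun s => (bE s : ℂ)
  have hεli : LinearIndependent (kerD D) ε := bE.linearIndependent.map' E.subtype (by simp)
  have hε0 : ∀ s, ε s ≠ 0 := hεli.ne_zero
  let T0 : Finset (ι × Fin m) := B ×ˢ Finset.univ
  let y : ℂ → ι × Fin m → ℂ := fun z p => ε p.2 * Complex.exp (w p.1 z)
  have hex : ∀ z : S, ∃ T ⊆ T0, T.Nonempty ∧ (∃ c : ι × Fin m → kerD D, (∀ p ∈ T, c p ≠ 0) ∧ ∑ p ∈ T, c p • y z p = 0) ∧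
      ∀ q ∈ T, LinearIndependent (kerD D) (fun p : (T.erase q : Finset (ι × Fin m)) => y z p) := by
    rintro ⟨z, hz⟩
    let c0 : ι × Fin m → kerD D := fun p => if h : p.1 ∈ B then bE.repr ⟨e p.1 z, he p.1 h z hz⟩ p.2 else 0
    have hez : ∀ i ∈ B, e i z = ∑ s, (c0 (i, s) : ℂ) * ε s := by
      intro i hi
      have h1 := bE.sum_repr ⟨e i z, he i hi z hz⟩
      have h2 := congrArg (Subtype.val : E → ℂ) h1
      rw [Submodule.coe_sum] at h2
      refine h2.symm.trans ?_
      refine Finset.sum_congr rfl fun s _ => ?_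
      simp only [c0, dif_pos hi]
      rfl
    refine minrel (y z) _ T0 rfl c0 ?_ ?_
    · obtain ⟨i, hi, hei⟩ := hne
      by_contra! hcon
      apply hei z hz
      rw [hez i hi]
      refine Finset.sum_eq_zero fun s _ => ?_
      rw [hcon (i, s) (by simp [T0, hi])]; simp
    · rw [← hsum z hz, Finset.sum_product]
      refine Finset.sum_congr rfl fun i hi => ?_
      rw [hez i hi, Finset.sum_mul]
      refine Finset.sum_congr rfl fun s _ => ?_
      change (c0 (i, s) : ℂ) * (ε s * Complex.exp (w i z)) = _
      ring
  choose Tf hTf hTne hTrel hTli using hex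
  obtain ⟨S1, hS1, hS1inf, T, hT⟩ := exists_infinite_const hS
    (fun z => if h : z ∈ S then Tf ⟨z, h⟩ else ∅)
    (by
      refine (T0.powerset.finite_toSet).subset ?_
      rintro _ ⟨z, hz, rfl⟩
      simp only [dif_pos hz, Finset.coe_powerset, Set.mem_preimage, Set.mem_powerset_iff, Finset.coe_subset]
      exact hTf _)
  have hT' : ∀ z (hz : z ∈ S1), Tf ⟨z, hS1 hz⟩ = T := by
    intro z hz
    have := hT z hz
    simpa only [dif_pos (hS1 hz)] using this
  have hTT0 : T ⊆ T0 := by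
    obtain ⟨z, hz⟩ := hS1inf.nonempty
    rw [← hT' z hz]; exact hTf _
  have hrel : ∀ z ∈ S1, ∃ c : ι × Fin m → kerD D, (∀ p ∈ T, c p ≠ 0) ∧ ∑ p ∈ T, c p • y z p = 0 := by
    intro z hz
    have := hTrel ⟨z, hS1 hz⟩
    rwa [hT' z hz] at this
  have hli : ∀ z ∈ S1, ∀ q ∈ T, LinearIndependent (kerD D) (fun p : (T.erase q : Finset (ι × Fin m)) => y z p) := by
    intro z hz
    have := hTli ⟨z, hS1 hz⟩
    rwa [hT' z hz] at this
  have hTn : T.Nonempty := by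
    obtain ⟨z, hz⟩ := hS1inf.nonempty
    rw [← hT' z hz]; exact hTne _
  obtain ⟨p0, hp0⟩ := hTn
  obtain ⟨p1, hp1, hp01⟩ : ∃ p1 ∈ T, p1.1 ≠ p0.1 := by
    by_contra! hcon
    obtain ⟨z, hz⟩ := hS1inf.nonempty
    obtain ⟨c, hc, hc0⟩ := hrel z hz
    have h1 : ∑ p ∈ T, c p • ε p.2 = 0 := by
      have h2 : (∑ p ∈ T, c p • ε p.2) * Complex.exp (w p0.1 z) = 0 := by
        rw [← hc0, Finset.sum_mul]
        refine Finset.sum_congr rfl fun p hp => ?_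
        simp only [y, hcon p hp, smul_mul_assoc]
      exact (mul_eq_zero.1 h2).resolve_right (Complex.exp_ne_zero _)
    have hinj : Set.InjOn (Prod.snd : ι × Fin m → Fin m) T := by
      intro a ha b hb hab
      exact Prod.ext ((hcon a ha).trans (hcon b hb).symm) hab
    have h3 : LinearIndependent (kerD D) (fun p : T => ε (p : ι × Fin m).2) := by
      refine hεli.comp (fun p : T => (p : ι × Fin m).2) ?_
      intro a b hab
      exact Subtype.ext (hinj a.2 b.2 hab)
    rw [Fintype.linearIndependent_iff] at h3
    have := h3 (fun p => c p) (by
      rw [← h1, ← Finset.sum_coe_sort T (fun p => c p • ε p.2)]) ⟨p0, hp0⟩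
    exact hc p0 hp0 this
  have hB : ∀ p ∈ T, p.1 ∈ B := fun p hp => by
    have := hTT0 hp
    simp only [T0, Finset.mem_product] at this
    exact this.1
  refine ⟨p0.1, hB p0 hp0, p1.1, hB p1 hp1, hp01.symm, ?_⟩
  -- the space of logarithmic derivatives
  let L : Submodule (kerD D) ℂ := Submodule.span (kerD D) (range fun s => D (ε s) / ε s) ⊔
    Submodule.span (kerD D) ((W.map (dlog D) : Submodule ℚ ℂ) : Set ℂ)
  have hLfg : L.FG := by
    refine Submodule.FG.sup (Submodule.fg_span (Set.finite_range _)) ?_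
    have hWfg : (W.map (dlog D)).FG := Submodule.FG.map _ ((Submodule.fg_iff_finiteDimensional W).2 inferInstance)
    obtain ⟨t, ht⟩ := hWfg
    rw [← ht, Submodule.span_span_of_tower]
    exact Submodule.fg_span t.finite_toSet
  obtain ⟨G, hG, hGy⟩ := lemC D L hLfg (T.erase p0).card
  obtain ⟨S', hS', hS'inf, hfin⟩ := lemB (kerD D) (kerD_alg D) _ W rfl S1 hS1inf (fun z => w p1.1 z - w p0.1 z)
    (by
      intro z hz z' hz'
      exact W.sub_mem (hw _ (hB p1 hp1) _ (hB p0 hp0) z (hS1 hz)) (hw _ (hB p1 hp1) _ (hB p0 hp0) z' (hS1 hz')))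
    (by
      intro A hA
      have hfinG := valuation_finite (kerD D) A hA G hG
      refine ((hfinG.image2 (fun a b => a / b * A.valuation (ε p0.2 / ε p1.2)) hfinG)).subset ?_
      rintro _ ⟨z, hz, rfl⟩
      obtain ⟨c, hc, hc0⟩ := hrel z hz
      let k : ι × Fin m → kerD D := fun q => -(c q / c p0)
      have hk0 : ∀ q ∈ T, k q ≠ 0 := fun q hq => neg_ne_zero.2 (div_ne_zero (hc q hq) (hc p0 hp0))
      let Y : ι × Fin m → ℂ := fun q => (k q : ℂ) * (ε q.2 * (ε p0.2)⁻¹ * Complex.exp (w q.1 z - w p0.1 z))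
      have hY : ∀ q, Y q = (k q : ℂ) * ((ε p0.2 * Complex.exp (w p0.1 z))⁻¹ * y z q) := by
        intro q
        simp only [Y, y, Complex.exp_sub, mul_inv]; ring
      have hp00 : ε p0.2 * Complex.exp (w p0.1 z) ≠ 0 := mul_ne_zero (hε0 _) (Complex.exp_ne_zero _)
      have hYsum : ∑ q ∈ T.erase p0, Y q = 1 := by
        rw [← Finset.add_sum_erase T _ hp0] at hc0
        have hcp0 : (c p0 : ℂ) ≠ 0 := by exact_mod_cast hc p0 hp0
        have h1 : ∑ q ∈ T.erase p0, (c q : ℂ) * y z q = - ((c p0 : ℂ) * (ε p0.2 * Complex.exp (w p0.1 z))) :=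
          eq_neg_of_add_eq_zero_right hc0
        have h2 : ∑ q ∈ T.erase p0, Y q = -(c p0 : ℂ)⁻¹ * (ε p0.2 * Complex.exp (w p0.1 z))⁻¹ *
            ∑ q ∈ T.erase p0, (c q : ℂ) * y z q := by
          rw [Finset.mul_sum]
          refine Finset.sum_congr rfl fun q _ => ?_
          rw [hY]
          have : (k q : ℂ) = -((c q : ℂ) / (c p0 : ℂ)) := by simp [k]
          rw [this]; ring
        rw [h2, h1]
        have := hε0 p0.2
        field_simp
      have hY0 : ∀ q ∈ T, Y q ≠ 0 := by
        intro q hq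
        refine mul_ne_zero (by exact_mod_cast hk0 q hq) (mul_ne_zero (mul_ne_zero (hε0 _) (inv_ne_zero (hε0 _))) (Complex.exp_ne_zero _))
      have hYL : ∀ q ∈ T, D (Y q) / Y q ∈ L := by
        intro q hq
        have hk : D (k q : ℂ) = 0 := (k q).2
        have hk' : (k q : ℂ) ≠ 0 := by exact_mod_cast hk0 q hq
        simp only [Y]
        rw [ld_mul D hk' (mul_ne_zero (mul_ne_zero (hε0 _) (inv_ne_zero (hε0 _))) (Complex.exp_ne_zero _)),
          ld_mul D (mul_ne_zero (hε0 _) (inv_ne_zero (hε0 _))) (Complex.exp_ne_zero _),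
          ld_mul D (hε0 _) (inv_ne_zero (hε0 _)), ld_inv D (hε0 _), hk, zero_div, zero_add, ← dlog_eq]
        refine Submodule.add_mem_sup ?_ ?_
        · exact Submodule.add_mem _ (Submodule.subset_span ⟨_, rfl⟩) (Submodule.neg_mem _ (Submodule.subset_span ⟨_, rfl⟩))
        · exact Submodule.subset_span ⟨_, hw _ (hB q hq) _ (hB p0 hp0) z (hS1 hz), rfl⟩
      let eq := (T.erase p0).equivFin
      have hYli : LinearIndependent (kerD D) (fun q : (T.erase p0 : Finset (ι × Fin m)) => Y q) := by
        have h1 := hli z hz p0 hp0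
        have h2 := h1.map' (LinearMap.mulLeft (kerD D) ((ε p0.2 * Complex.exp (w p0.1 z))⁻¹))
          (by
            rw [LinearMap.ker_eq_bot]
            exact mul_right_injective₀ (inv_ne_zero hp00))
        have h3 := h2.units_smul (fun q => Units.mk0 (k q) (hk0 q (Finset.mem_of_mem_erase q.2)))
        have h4 : (fun q : (T.erase p0 : Finset (ι × Fin m)) => Y q) = _ := funext fun q => hY q
        rw [h4]
        exact h3
      have hmem : ∀ j, ((eq.symm j : (T.erase p0 : Finset (ι × Fin m))) : ι × Fin m) ∈ T :=
        fun j => Finset.mem_of_mem_erase (eq.symm j).2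
      have hp1' : p1 ∈ T.erase p0 := Finset.mem_erase.2 ⟨fun h => hp01 (by rw [h]), hp1⟩
      obtain ⟨u, hu, v, hv, hu0, hv0, huv⟩ := hGy (fun j => Y (eq.symm j)) (fun j => hY0 _ (hmem j)) (fun j => hYL _ (hmem j))
        (by
          rw [← hYsum, ← Finset.sum_coe_sort (T.erase p0) Y]
          exact Equiv.sum_comp eq.symm (fun q => Y q))
        (hYli.comp _ eq.symm.injective) (eq ⟨p1, hp1'⟩)
      refine ⟨_, ⟨u, hu, hu0, rfl⟩, _, ⟨v, hv, hv0, rfl⟩, ?_⟩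
      simp only [Equiv.symm_apply_apply] at huv
      simp only
      rw [← map_div₀, ← huv, ← map_mul]
      have hk' : (k p1 : ℂ) ≠ 0 := by exact_mod_cast hk0 p1 hp1
      have h4 : Y p1 * (ε p0.2 / ε p1.2) = (k p1 : ℂ) * Complex.exp (w p1.1 z - w p0.1 z) := by
        simp only [Y]
        have := hε0 p0.2
        have := hε0 p1.2
        field_simp
      rw [h4, map_mul, valuation_one (kerD D) A hA _ (k p1).2 hk', one_mul])
  exact ⟨S', hS'.trans hS1, hS'inf, hfin⟩


theorem MinZero.ne_zero {ι : Type*} {B : Finset ι} {w : ι → ℂ} (h : MinZero B w) (hB : 2 ≤ B.card)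
    {i : ι} (hi : i ∈ B) : w i ≠ 0 := by
  have := h.2.2 {i} (by simpa using hi) (by simp) (by rintro rfl; simp at hB)
  simpa using this

theorem MinZero.merge {ι : Type*} [DecidableEq ι] {B : Finset ι} {w w' : ι → ℂ} (h : MinZero B w)
    {i j : ι} (hi : i ∈ B) (hj : j ∈ B) (hij : i ≠ j) (hw' : ∀ k ∈ B, k ≠ i → k ≠ j → w' k = w k)
    (hi' : w' i = w i + w j) : MinZero (B.erase j) w' := by
  have key : ∀ A ⊆ B.erase j, ∑ k ∈ A, w' k = ∑ k ∈ (if i ∈ A then insert j A else A), w k := by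
    intro A hA
    have hjA : j ∉ A := fun h => by simpa using hA h
    by_cases hiA : i ∈ A
    · rw [if_pos hiA, Finset.sum_insert hjA, ← Finset.add_sum_erase A w' hiA, ← Finset.add_sum_erase A w hiA, hi']
      have : ∑ k ∈ A.erase i, w' k = ∑ k ∈ A.erase i, w k := by
        refine Finset.sum_congr rfl fun k hk => ?_
        have hkA := Finset.mem_of_mem_erase hk
        have := Finset.mem_erase.1 (hA hkA)
        exact hw' k this.2 (Finset.ne_of_mem_erase hk) this.1
      rw [this]; ring
    · rw [if_neg hiA]
      refine Finset.sum_congr rfl fun k hk => ?_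
      have := Finset.mem_erase.1 (hA hk)
      exact hw' k this.2 (fun h => hiA (h ▸ hk)) this.1
  have hie : i ∈ B.erase j := Finset.mem_erase.2 ⟨hij, hi⟩
  refine ⟨⟨i, hie⟩, ?_, ?_⟩
  · rw [key _ le_rfl, if_pos hie, Finset.insert_erase hj]; exact h.2.1
  · intro A hA hAne hAB
    rw [key A hA]
    have hjA : j ∉ A := fun h => by simpa using hA h
    apply h.2.2
    · split_ifs
      · exact Finset.insert_subset hj (hA.trans (Finset.erase_subset _ _))
      · exact hA.trans (Finset.erase_subset _ _)
    · split_ifs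
      · exact Finset.insert_nonempty _ _
      · exact hAne
    · split_ifs with hiA
      · intro heq
        apply hAB
        rw [← heq, Finset.erase_insert hjA]
      · intro heq
        apply hiA; rw [heq]; exact hi

theorem lemA (D : Derivation ℚ ℂ ℂ) {ι : Type*} [DecidableEq ι] (W : Submodule ℚ ℂ) [FiniteDimensional ℚ W]
    (w : ι → ℂ → ℂ) : ∀ (n : ℕ) (B : Finset ι) (_ : B.card = n)
    (E : Submodule (kerD D) ℂ) (_ : E.FG) (e : ι → ℂ → ℂ) (S : Set ℂ) (_ : S.Infinite)
    (_ : ∀ i ∈ B, ∀ z ∈ S, e i z ∈ E) (_ : ∀ i ∈ B, ∀ j ∈ B, ∀ z ∈ S, w i z - w j z ∈ W)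
    (_ : ∀ z ∈ S, MinZero B (fun i => e i z * Complex.exp (w i z))),
    ∃ S' ⊆ S, S'.Infinite ∧ ∀ z ∈ S', ∀ z' ∈ S', ∀ i ∈ B, ∀ j ∈ B,
      Complex.exp ((w i z - w j z) - (w i z' - w j z')) ∈ kerD D := by
  intro n
  induction n with
  | zero =>
    intro B hB E hE e S hS he hw hmin
    obtain ⟨z, hz⟩ := hS.nonempty
    obtain ⟨i, hi⟩ := (hmin z hz).1
    have : B = ∅ := by simpa using hB
    simp [this] at hi
  | succ n ih =>
    intro B hB E hE e S hS he hw hmin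
    by_cases h2 : 2 ≤ B.card
    swap
    · refine ⟨S, le_rfl, hS, ?_⟩
      intro z _ z' _ i hi j hj
      have : i = j := Finset.card_le_one.1 (by omega) i hi j hj
      subst this
      simp only [sub_self, Complex.exp_zero]
      exact (kerD D).one_mem
    obtain ⟨i0, hi0⟩ : B.Nonempty := by rw [← Finset.card_pos]; omega
    obtain ⟨i, hi, j, hj, hij, S1, hS1, hS1inf, hS1K⟩ := lemA0 D W E hE B e w S hS he hw
      ⟨i0, hi0, fun z hz h0 => (hmin z hz).ne_zero h2 hi0 (by simp [h0])⟩ (fun z hz => (hmin z hz).2.1)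
    obtain ⟨z0, hz0⟩ := hS1inf.nonempty
    let ρ := Complex.exp (w j z0 - w i z0)
    let E' := E ⊔ E.map (LinearMap.mulLeft (kerD D) ρ)
    let e' : ι → ℂ → ℂ := fun k z => if k = i then e i z + e j z * Complex.exp (w j z - w i z) else e k z
    obtain ⟨S', hS', hS'inf, hS'K⟩ := ih (B.erase j) (by rw [Finset.card_erase_of_mem hj, hB]; rfl) E'
      (hE.sup (hE.map _)) e' S1 hS1inf
      (by
        intro k hk z hz
        have hkB := Finset.mem_of_mem_erase hk
        simp only [e']
        split_ifs with hki
        · refine Submodule.add_mem_sup (he i hi z (hS1 hz)) ?_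
          refine ⟨(⟨_, hS1K z hz z0 hz0⟩ : kerD D) • e j z, E.smul_mem _ (he j hj z (hS1 hz)), ?_⟩
          change ρ * (Complex.exp ((w j z - w i z) - (w j z0 - w i z0)) * e j z) = _
          simp only [ρ, Complex.exp_sub _ (w j z0 - w i z0)]
          field_simp [Complex.exp_ne_zero]
        · exact Submodule.mem_sup_left (he k hkB z (hS1 hz)))
      (fun k hk l hl z hz => hw k (Finset.mem_of_mem_erase hk) l (Finset.mem_of_mem_erase hl) z (hS1 hz))
      (by
        intro z hz
        refine (hmin z (hS1 hz)).merge hi hj hij ?_ ?_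
        · intro k _ hki _
          simp [e', hki]
        · simp only [e', if_pos, Complex.exp_sub]
          field_simp [Complex.exp_ne_zero])
    refine ⟨S', hS'.trans hS1, hS'inf, ?_⟩
    intro z hz z' hz'
    have hiB : i ∈ B.erase j := Finset.mem_erase.2 ⟨hij, hi⟩
    have key : ∀ k ∈ B, dlog D ((w k z - w i z) - (w k z' - w i z')) = 0 := by
      intro k hk
      rw [dlog_eq_zero]
      by_cases hkj : k = j
      · subst hkj
        exact hS1K z (hS' hz) z' (hS' hz')
      · exact hS'K z hz z' hz' k (Finset.mem_erase.2 ⟨hkj, hk⟩) i hiB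
    intro k hk l hl
    rw [← dlog_eq_zero]
    have : (w k z - w l z) - (w k z' - w l z') = ((w k z - w i z) - (w k z' - w i z')) - ((w l z - w i z) - (w l z' - w i z')) := by
      ring
    rw [this, map_sub, key k hk, key l hl, sub_zero]

theorem step2 {ι : Type*} [DecidableEq ι] (W : Submodule ℚ ℂ) [FiniteDimensional ℚ W]
    (B : Finset ι) (lam mu : ι → ℂ) (S : Set ℂ) (hS : S.Infinite)
    (hw : ∀ i ∈ B, ∀ j ∈ B, ∀ z ∈ S, (mu i - mu j) * z ∈ W)
    (hmin : ∀ z ∈ S, MinZero B (fun i => lam i * Complex.exp (mu i * z))) :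
    ∃ S' ⊆ S, S'.Infinite ∧ ∀ z ∈ S', ∀ z' ∈ S', ∀ i ∈ B, ∀ j ∈ B,
      IsAlgebraic ℚ (Complex.exp ((mu i - mu j) * (z - z'))) := by
  let gens : Set ℂ → Set ℂ := fun S => {x | ∃ z ∈ S, ∃ z' ∈ S, ∃ i ∈ B, ∃ j ∈ B, x = (mu i - mu j) * (z - z')}
  have hgW : ∀ S' ⊆ S, Submodule.span ℚ (gens S') ≤ W := by
    intro S' hS'
    rw [Submodule.span_le]
    rintro _ ⟨z, hz, z', hz', i, hi, j, hj, rfl⟩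
    rw [mul_sub]
    exact W.sub_mem (hw i hi j hj z (hS' hz)) (hw i hi j hj z' (hS' hz'))
  let P : ℕ → Prop := fun d => ∃ S' ⊆ S, S'.Infinite ∧ Module.finrank ℚ (Submodule.span ℚ (gens S')) = d
  have hP : ∃ d, P d := ⟨_, S, le_rfl, hS, rfl⟩
  classical
  obtain ⟨S', hS', hS'inf, hd⟩ := Nat.find_spec hP
  refine ⟨S', hS', hS'inf, ?_⟩
  intro z hz z' hz' i hi j hj
  by_contra htr
  obtain ⟨D, hD⟩ := exists_derivation_ne_zero _ htr
  apply hD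
  obtain ⟨S2, hS2, hS2inf, hK⟩ := lemA D W (fun i z => mu i * z) B.card B rfl
    (Submodule.span (kerD D) (lam '' B)) (Submodule.fg_span (B.finite_toSet.image _)) (fun i _ => lam i) S' hS'inf
    (fun i hi z _ => Submodule.subset_span ⟨i, hi, rfl⟩)
    (fun i hi j hj z hz => by rw [← sub_mul]; exact hw i hi j hj z (hS' hz))
    (fun z hz => hmin z (hS' hz))
  have hle : Submodule.span ℚ (gens S2) ≤ Submodule.span ℚ (gens S') := by
    apply Submodule.span_mono
    rintro _ ⟨z, hz, z', hz', h⟩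
    exact ⟨z, hS2 hz, z', hS2 hz', h⟩
  have hfd : FiniteDimensional ℚ (Submodule.span ℚ (gens S')) := Submodule.finiteDimensional_of_le (hgW S' hS')
  have heq : Submodule.span ℚ (gens S2) = Submodule.span ℚ (gens S') := by
    apply Submodule.eq_of_le_of_finrank_le hle
    rw [hd]
    exact Nat.find_min' hP ⟨S2, hS2.trans hS', hS2inf, rfl⟩
  have hker : Submodule.span ℚ (gens S2) ≤ LinearMap.ker (dlog D) := by
    rw [Submodule.span_le]
    rintro _ ⟨z, hz, z', hz', i, hi, j, hj, rfl⟩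
    rw [SetLike.mem_coe, LinearMap.mem_ker, dlog_eq_zero]
    have := hK z hz z' hz' i hi j hj
    convert this using 2
    ring
  have hmem : (mu i - mu j) * (z - z') ∈ Submodule.span ℚ (gens S') :=
    Submodule.subset_span ⟨z, hz, z', hz', i, hi, j, hj, rfl⟩
  rw [← heq] at hmem
  have := hker hmem
  rw [LinearMap.mem_ker, dlog_eq_zero] at this
  exact this


theorem sc_finset (hSC : SchanuelConjecture) {n : ℕ} (w : Fin n → ℂ) (hw : LinearIndependent ℚ w) :
    ∃ t : Finset ℂ, (t : Set ℂ) ⊆ range w ∪ range (fun i => Complex.exp (w i)) ∧ n ≤ t.card ∧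
      AlgebraicIndependent ℚ (Subtype.val : {x : ℂ // x ∈ t} → ℂ) := by
  have h := hSC n w hw
  by_contra! hcon
  rcases Nat.eq_zero_or_pos n with rfl | hn
  · have h1 := hcon ∅ (by simp)
    simp only [Nat.zero_le, forall_const] at h1
    apply h1
    have : IsEmpty {x : ℂ // x ∈ (∅ : Finset ℂ)} := ⟨fun x => Finset.notMem_empty _ x.2⟩
    rw [algebraicIndependent_empty_type_iff]
    exact (algebraMap ℚ ℂ).injective
  · have h2 : trdegQ (range w ∪ range fun i => Complex.exp (w i)) ≤ ((n - 1 : ℕ) : Cardinal) := by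
      unfold trdegQ
      apply ciSup_le'
      rintro ⟨t, ht, hai⟩
      have := hcon t ht
      by_contra hlt
      simp only [Nat.cast_le, not_le] at hlt
      exact this (by omega) hai
    have h3 := h.trans h2
    rw [Nat.cast_le] at h3
    omega

theorem mem_of_qsmul_exp (F : Subfield ℂ) (hF : ∀ x : ℂ, IsAlgebraic F x → x ∈ F) (a : ℂ) (q : ℚ)
    (ha : Complex.exp a ∈ F) : Complex.exp (q • a) ∈ F := by
  have h1 : (Complex.exp (q • a)) ^ q.den = (Complex.exp a) ^ q.num := by
    rw [← Complex.exp_nat_mul, ← Complex.exp_int_mul]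
    congr 1
    rw [Rat.smul_def, ← mul_assoc]
    congr 1
    have := Rat.den_mul_eq_num q
    exact_mod_cast congrArg (fun x : ℚ => (x : ℂ)) this
  apply hF
  refine IsAlgebraic.of_pow q.den_pos ?_
  rw [h1]
  exact isAlgebraic_algebraMap (⟨_, F.zpow_mem ha _⟩ : F)

def expSub (F : Subfield ℂ) (hF : ∀ x : ℂ, IsAlgebraic F x → x ∈ F) : Submodule ℚ ℂ where
  carrier := {w | w ∈ F ∧ Complex.exp w ∈ F}
  zero_mem' := by
    constructor
    · exact F.zero_mem
    · rw [Complex.exp_zero]; exact F.one_mem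
  add_mem' := by
    rintro a b ⟨ha, ha'⟩ ⟨hb, hb'⟩
    exact ⟨F.add_mem ha hb, by rw [Complex.exp_add]; exact F.mul_mem ha' hb'⟩
  smul_mem' := by
    rintro q a ⟨ha, ha'⟩
    refine ⟨?_, mem_of_qsmul_exp F hF a q ha'⟩
    rw [Rat.smul_def]
    exact F.mul_mem (SubfieldClass.ratCast_mem F q) ha

theorem base_lemma (hSC : SchanuelConjecture) (C : Finset ℂ) : ∃ (W : Submodule ℚ ℂ) (F : Subfield ℂ),
    FiniteDimensional ℚ W ∧ (∀ c ∈ C, c ∈ F) ∧ (∀ w ∈ W, w ∈ F ∧ Complex.exp w ∈ F) ∧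
    (∀ x : ℂ, IsAlgebraic F x → x ∈ F) ∧
    ∀ (n : ℕ) (w : Fin n → ℂ), LinearIndependent ℚ (fun i => W.mkQ (w i)) →
      ∃ t : Finset ℂ, (t : Set ℂ) ⊆ range w ∪ range (fun i => Complex.exp (w i)) ∧ n ≤ t.card ∧
        AlgebraicIndependent F (Subtype.val : {x : ℂ // x ∈ t} → ℂ) := by
  classical
  let M := AlgebraicIndependent.matroid ℚ ℂ
  let X : ∀ m : ℕ, (Fin m → ℂ) → Set ℂ := fun m b => (C : Set ℂ) ∪ (range b ∪ range (fun i => Complex.exp (b i)))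
  have hXfin : ∀ m b, (X m b).Finite := fun m b =>
    C.finite_toSet.union ((finite_range _).union (finite_range _))
  -- bases of finite sets
  have hlow : ∀ m (b : Fin m → ℂ), LinearIndependent ℚ b → ∀ s, M.IsBasis s (X m b) → m ≤ s.ncard := by
    intro m b hb s hs
    obtain ⟨t, ht, hcard, hai⟩ := sc_finset hSC b hb
    have hti : M.Indep (t : Set ℂ) := AlgebraicIndependent.matroid_indep_iff.2 hai
    obtain ⟨s', hs', hts'⟩ := hti.subset_isBasis_of_subset (ht.trans Set.subset_union_right) (by simp [M])
    have h1 : s.ncard = s'.ncard := by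
      have := hs.encard_eq_encard hs'
      rw [Set.ncard, Set.ncard, this]
    rw [h1]
    have h2 : (t : Set ℂ).ncard ≤ s'.ncard := Set.ncard_le_ncard hts' ((hXfin m b).subset hs'.subset)
    rw [Set.ncard_coe_finset] at h2
    omega
  let P : ℕ → Prop := fun d => ∃ m, ∃ b : Fin m → ℂ, LinearIndependent ℚ b ∧ ∃ s, M.IsBasis s (X m b) ∧ s.ncard - m = d
  have hP : ∃ d, P d := by
    obtain ⟨s, hs⟩ := M.exists_isBasis (X 0 Fin.elim0) (by simp [M])
    exact ⟨_, 0, Fin.elim0, linearIndependent_empty_type, s, hs, rfl⟩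
  obtain ⟨m, b, hb, s, hs, hd⟩ := Nat.find_spec hP
  have hmin : ∀ m' (b' : Fin m' → ℂ), LinearIndependent ℚ b' → ∀ s', M.IsBasis s' (X m' b') → s.ncard - m ≤ s'.ncard - m' := by
    intro m' b' hb' s' hs'
    rw [hd]
    exact Nat.find_min' hP ⟨m', b', hb', s', hs', rfl⟩
  let A := Subalgebra.algebraicClosure (Algebra.adjoin ℚ s) ℂ
  let F : Subfield ℂ :=
    { A.toSubring with
      inv_mem' := fun x hx => IsAlgebraic.inv hx }
  have hFmem : ∀ x, x ∈ F ↔ IsAlgebraic (Algebra.adjoin ℚ s) x := fun x => Iff.rfl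
  have hFalg : ∀ x : ℂ, IsAlgebraic F x → x ∈ F := by
    intro x hx
    have hx' : IsAlgebraic A x := hx
    rw [hFmem]
    exact hx'.restrictScalars (Algebra.adjoin ℚ s)
  have hXF : ∀ x ∈ X m b, x ∈ F := by
    intro x hx
    have h1 : x ∈ M.closure s := by
      rw [hs.closure_eq_closure]
      exact M.mem_closure_of_mem hx (by simp [M])
    have h2 := AlgebraicIndependent.matroid_closure_eq (R := ℚ) (A := ℂ) (s := s)
    have h3 : x ∈ (A : Set ℂ) := by rw [← h2]; exact h1
    exact h3
  have hWF : Submodule.span ℚ (range b) ≤ expSub F hFalg := by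
    rw [Submodule.span_le]
    rintro _ ⟨i, rfl⟩
    exact ⟨hXF _ (Or.inr (Or.inl ⟨i, rfl⟩)), hXF _ (Or.inr (Or.inr ⟨i, rfl⟩))⟩
  refine ⟨Submodule.span ℚ (range b), F, FiniteDimensional.span_of_finite ℚ (finite_range b),
    fun c hc => hXF c (Or.inl hc), fun w hw => hWF hw, hFalg, ?_⟩
  intro n w hw
  have hbw : LinearIndependent ℚ (Fin.append b w) := by
    rw [← linearIndependent_equiv finSumFinEquiv]
    have : (Fin.append b w) ∘ finSumFinEquiv = Sum.elim b w := by
      funext x; cases x <;> simp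
    rw [this]
    have hli := LinearIndependent.sumElim_of_quotient (M' := Submodule.span ℚ (range b))
      (f := fun i => (⟨b i, Submodule.subset_span ⟨i, rfl⟩⟩ : Submodule.span ℚ (range b))) (by
        refine LinearIndependent.of_comp (Submodule.span ℚ (range b)).subtype ?_
        exact hb) w (by exact hw)
    exact hli
  let Y := range w ∪ range (fun i => Complex.exp (w i))
  have hXY : X (m + n) (Fin.append b w) = X m b ∪ Y := by
    have h1 : range (Fin.append b w) = range b ∪ range w := by
      ext x
      constructor
      · rintro ⟨i, rfl⟩
        refine Fin.addCases (fun i => ?_) (fun i => ?_) i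
        · left; exact ⟨i, by simp⟩
        · right; exact ⟨i, by simp⟩
      · rintro (⟨i, rfl⟩ | ⟨i, rfl⟩)
        · exact ⟨Fin.castAdd n i, by simp⟩
        · exact ⟨Fin.natAdd m i, by simp⟩
    have h2 : ∀ k (v : Fin k → ℂ), range (fun i => Complex.exp (v i)) = Complex.exp '' range v := by
      intro k v; rw [← Set.range_comp]; rfl
    simp only [X, Y, h2, h1, Set.image_union]
    ext x; simp only [Set.mem_union]; tauto
  obtain ⟨s', hs', hss'⟩ := hs.indep.subset_isBasis_of_subset (X := X m b ∪ Y)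
    (hs.subset.trans Set.subset_union_left) (by simp [M])
  have hcard := hmin (m + n) _ hbw s' (by rw [hXY]; exact hs')
  have hlow1 := hlow m b hb s hs
  have hlow2 := hlow (m + n) _ hbw s' (by rw [hXY]; exact hs')
  have hs'fin : s'.Finite := by
    have := hXfin (m + n) (Fin.append b w)
    rw [hXY] at this
    exact this.subset hs'.subset
  have htfin : (s' \ s).Finite := hs'fin.subset Set.diff_subset
  have hdiff : (s' \ s).ncard + s.ncard = s'.ncard := Set.ncard_sdiff_add_ncard_of_subset hss' hs'fin
  refine ⟨htfin.toFinset, ?_, ?_, ?_⟩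
  · rw [Set.Finite.coe_toFinset]
    rintro x ⟨hx, hxs⟩
    rcases hs'.subset hx with h | h
    · exfalso
      apply hxs
      have h1 : M.Indep (insert x s) := hs'.indep.subset (Set.insert_subset hx hss')
      exact hs.mem_of_insert_indep h h1
    · exact h
  · rw [← Set.ncard_eq_toFinset_card _ htfin]
    omega
  · have h1 : AlgebraicIndependent ℚ (Subtype.val : s' → ℂ) := AlgebraicIndependent.matroid_indep_iff.1 hs'.indep
    have h2 := h1.adjoin_of_disjoint (s := {x : s' | (x : ℂ) ∈ s}) (t := {x : s' | (x : ℂ) ∉ s})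
      (by rw [Set.disjoint_left]; intro x hx hx'; exact hx' hx)
    have h3 : (Subtype.val : s' → ℂ) '' {x : s' | (x : ℂ) ∈ s} = s := by
      ext x; constructor
      · rintro ⟨y, hy, rfl⟩; exact hy
      · intro hx; exact ⟨⟨x, hss' hx⟩, hx, rfl⟩
    rw [h3] at h2
    have h4 : AlgebraicIndependent A (fun x : {x : s' | (x : ℂ) ∉ s} => ((x : s') : ℂ)) :=
      AlgebraicIndependent.subalgebraAlgebraicClosure h2
    let g : {x : ℂ // x ∈ htfin.toFinset} → {x : s' | (x : ℂ) ∉ s} := fun x =>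
      ⟨⟨x, ((Set.Finite.mem_toFinset _).1 x.2).1⟩, ((Set.Finite.mem_toFinset _).1 x.2).2⟩
    have h5 := h4.comp g (by
      intro x y hxy
      apply Subtype.ext
      have := congrArg (fun u : {x : s' | (x : ℂ) ∉ s} => ((u : s') : ℂ)) hxy
      exact this)
    exact h5


theorem algindep_eval_zero (F : Subfield ℂ) {κ : Type*} (v : κ → ℂ)
    (hv : AlgebraicIndependent F v) (p : MvPolynomial κ ℂ) (hp : ∀ m, p.coeff m ∈ F)
    (h0 : MvPolynomial.eval v p = 0) : p = 0 := by
  have h1 : p ∈ range (MvPolynomial.map (algebraMap F ℂ) : MvPolynomial κ F →+* MvPolynomial κ ℂ) := by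
    rw [MvPolynomial.mem_range_map_iff_coeffs_subset]
    intro x hx
    rw [Finset.mem_coe, MvPolynomial.mem_coeffs_iff] at hx
    obtain ⟨m, _, rfl⟩ := hx
    exact ⟨⟨_, hp m⟩, rfl⟩
  obtain ⟨q, rfl⟩ := h1
  rw [MvPolynomial.eval_map] at h0
  have := (algebraicIndependent_iff.1 hv) q h0
  simp [this]

open Polynomial in
theorem elim_poly {A : Type*} [CommRing A] [IsDomain A] [UniqueFactorizationMonoid A]
    (p q : A[X]) (h : IsRelPrime p q) : ∃ r : A, r ≠ 0 ∧ ∃ a b : A[X], a * p + b * q = C r := by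
  classical
  letI : StrongNormalizationMonoid A := UniqueFactorizationMonoid.normalizationMonoid
  letI : StrongNormalizedGCDMonoid A := UniqueFactorizationMonoid.toStrongNormalizedGCDMonoid A
  let K := FractionRing A
  have hinj : Function.Injective (algebraMap A K) := IsFractionRing.injective A K
  have hco : IsCoprime (p.map (algebraMap A K)) (q.map (algebraMap A K)) := by
    apply IsRelPrime.isCoprime
    intro d hdp hdq
    by_cases hd0 : d = 0
    · subst hd0
      rw [zero_dvd_iff, Polynomial.map_eq_zero_iff hinj] at hdp hdq
      subst hdp hdq
      exact absurd (h (dvd_refl _) (dvd_refl _)) not_isUnit_zero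
    obtain ⟨c, hc, hcd⟩ := IsLocalization.integerNormalization_spec (nonZeroDivisors A) d
    set e := IsLocalization.integerNormalization (nonZeroDivisors A) d
    have hc0 : c ≠ 0 := nonZeroDivisors.ne_zero hc
    have he0 : e ≠ 0 := by
      intro h0
      rw [h0, Algebra.smul_def, Polynomial.map_zero] at hcd
      rcases mul_eq_zero.1 hcd.symm with h7 | h7
      · rw [Polynomial.algebraMap_apply, Polynomial.C_eq_zero] at h7
        exact hc0 (hinj (by simpa using h7))
      · exact hd0 h7
    have hcu : IsUnit (C (algebraMap A K c)) := by
      rw [isUnit_C]; exact IsUnit.mk0 _ (by simpa using hc0)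
    have hcont : IsUnit (C (algebraMap A K e.content)) := by
      rw [isUnit_C]; refine IsUnit.mk0 _ ?_
      simpa [content_eq_zero_iff] using he0
    have h1 : e.map (algebraMap A K) = C (algebraMap A K c) * d := by
      rw [hcd, Algebra.smul_def]; rfl
    have h2 : C (algebraMap A K e.content) * e.primPart.map (algebraMap A K)
        = C (algebraMap A K c) * d := by
      rw [← h1]; conv_rhs => rw [e.eq_C_content_mul_primPart]
      simp
    have h3 : ∀ x, d ∣ x → e.primPart.map (algebraMap A K) ∣ x := by
      intro x hx
      have : C (algebraMap A K e.content) * e.primPart.map (algebraMap A K) ∣ x := by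
        rw [h2]; exact (hcu.mul_left_dvd).2 hx
      exact (hcont.mul_left_dvd).1 this
    have h4 := h (e.isPrimitive_primPart.dvd_of_fraction_map_dvd_fraction_map (h3 _ hdp))
      (e.isPrimitive_primPart.dvd_of_fraction_map_dvd_fraction_map (h3 _ hdq))
    have h5 : IsUnit (e.primPart.map (algebraMap A K)) := h4.map (mapRingHom (algebraMap A K))
    have h6 := hcont.mul h5
    rw [h2] at h6
    exact isUnit_of_mul_isUnit_right h6
  obtain ⟨a, b, hab⟩ := hco
  obtain ⟨c, hc, hcd⟩ := IsLocalization.integerNormalization_spec (nonZeroDivisors A) a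
  obtain ⟨c', hc', hcd'⟩ := IsLocalization.integerNormalization_spec (nonZeroDivisors A) b
  refine ⟨c * c', mul_ne_zero (nonZeroDivisors.ne_zero hc) (nonZeroDivisors.ne_zero hc'),
    C c' * IsLocalization.integerNormalization (nonZeroDivisors A) a,
    C c * IsLocalization.integerNormalization (nonZeroDivisors A) b, ?_⟩
  apply Polynomial.map_injective _ hinj
  simp only [Polynomial.map_add, Polynomial.map_mul, map_C, hcd, hcd', Algebra.smul_def, map_mul]
  simp only [Polynomial.algebraMap_apply]
  linear_combination (C (algebraMap A K c) * C (algebraMap A K c')) * hab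

theorem elim_mv {n : ℕ} (P Q : MvPolynomial (Fin (n+1)) ℂ) (h : IsRelPrime P Q) (i : Fin (n+1)) :
    ∃ R : MvPolynomial (Fin n) ℂ, R ≠ 0 ∧ ∃ A B, A * P + B * Q = MvPolynomial.rename i.succAbove R := by
  let e : MvPolynomial (Fin (n+1)) ℂ ≃ₐ[ℂ] Polynomial (MvPolynomial (Fin n) ℂ) :=
    (MvPolynomial.renameEquiv ℂ (finSuccEquiv' i)).trans (MvPolynomial.optionEquivLeft ℂ (Fin n))
  have h' : IsRelPrime (e P) (e Q) := by
    intro d h1 h2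
    have := @h (e.symm d) (by rw [← e.symm_apply_apply P]; exact map_dvd _ h1)
      (by rw [← e.symm_apply_apply Q]; exact map_dvd _ h2)
    simpa using this.map e
  obtain ⟨r, hr, a, b, hab⟩ := elim_poly _ _ h'
  refine ⟨r, hr, e.symm a, e.symm b, ?_⟩
  apply e.injective
  rw [map_add, map_mul, map_mul, e.apply_symm_apply, e.apply_symm_apply, hab]
  have : (e : _ →ₐ[ℂ] _).comp (MvPolynomial.rename i.succAbove) = 
     (Polynomial.CAlgHom : MvPolynomial (Fin n) ℂ →ₐ[MvPolynomial (Fin n) ℂ] _).restrictScalars ℂ := by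
    apply MvPolynomial.algHom_ext
    intro j
    simp [e]
  exact (DFunLike.congr_fun this r).symm


theorem algindep_int_exp (F : Subfield ℂ) {n : ℕ} (y : Fin n → ℂ) (hy0 : ∀ j, y j ≠ 0)
    (hy : AlgebraicIndependent F y) {ι : Type*} (B : Finset ι) (c : ι → ℂ)
    (hc : ∀ i ∈ B, c i ∈ F) (m : ι → Fin n → ℤ)
    (h0 : ∑ i ∈ B, c i * ∏ j, y j ^ (m i j) = 0) (m0 : Fin n → ℤ) :
    ∑ i ∈ B with m i = m0, c i = 0 := by
  classical
  by_cases hm0 : ∃ i ∈ B, m i = m0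
  swap
  · rw [Finset.filter_false_of_mem]
    · simp
    · intro i hi h; exact hm0 ⟨i, hi, h⟩
  obtain ⟨i0, hi0, rfl⟩ := hm0
  let M : ℤ := ∑ i ∈ B, ∑ j, |m i j|
  have hM : ∀ i ∈ B, ∀ j, 0 ≤ m i j + M := by
    intro i hi j
    have h1 : |m i j| ≤ ∑ j, |m i j| :=
      Finset.single_le_sum (f := fun j => |m i j|) (fun _ _ => abs_nonneg _) (Finset.mem_univ j)
    have h2 : ∑ j, |m i j| ≤ M :=
      Finset.single_le_sum (f := fun i => ∑ j, |m i j|)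
        (fun _ _ => Finset.sum_nonneg fun _ _ => abs_nonneg _) hi
    have := neg_abs_le (m i j)
    linarith
  let e : ι → (Fin n →₀ ℕ) := fun i => Finsupp.equivFunOnFinite.symm (fun j => (m i j + M).toNat)
  have he : ∀ i ∈ B, ∀ j, ((e i j : ℕ) : ℤ) = m i j + M := by
    intro i hi j
    simp [e, hM i hi j]
  let p : MvPolynomial (Fin n) ℂ := ∑ i ∈ B, MvPolynomial.monomial (e i) (c i)
  have hp : p = 0 := by
    apply algindep_eval_zero F y hy
    · intro d
      simp only [p, MvPolynomial.coeff_sum, MvPolynomial.coeff_monomial]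
      refine sum_mem fun i hi => ?_
      split_ifs
      · exact hc i hi
      · exact F.zero_mem
    · simp only [p, map_sum, MvPolynomial.eval_monomial]
      have : ∀ i ∈ B, (c i * (e i).prod fun j k => y j ^ k)
          = (∏ j, y j ^ M) * (c i * ∏ j, y j ^ (m i j)) := by
        intro i hi
        rw [Finsupp.prod_fintype _ _ (by simp), mul_left_comm, ← Finset.prod_mul_distrib]
        congr 1
        refine Finset.prod_congr rfl fun j _ => ?_
        rw [← zpow_natCast, he i hi, zpow_add₀ (hy0 j), mul_comm]
      rw [Finset.sum_congr rfl this, ← Finset.mul_sum, h0, mul_zero]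
  have h1 : p.coeff (e i0) = 0 := by rw [hp]; simp
  simp only [p, MvPolynomial.coeff_sum, MvPolynomial.coeff_monomial] at h1
  rw [Finset.sum_filter]
  refine Eq.trans ?_ h1
  refine Finset.sum_congr rfl fun i hi => ?_
  have : m i = m i0 ↔ e i = e i0 := by
    constructor
    · intro h; simp [e, h]
    · intro h; funext j
      have h2 := he i hi j
      rw [h, he i0 hi0 j] at h2
      linarith
  simp [this]

theorem algindep_not_mem {F : Subfield ℂ} {t : Finset ℂ}
    (ht : AlgebraicIndependent F (Subtype.val : {x // x ∈ t} → ℂ)) {x : ℂ} (hx : x ∈ t) : x ∉ F := by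
  intro hF
  have := ht.transcendental ⟨x, hx⟩
  exact this (isAlgebraic_algebraMap (⟨x, hF⟩ : F))

theorem lemD (W : Submodule ℚ ℂ) (F : Subfield ℂ)
    (hWF : ∀ w ∈ W, w ∈ F ∧ exp w ∈ F)
    (hai : ∀ n (w : Fin n → ℂ), LinearIndependent ℚ (fun i => W.mkQ (w i)) →
      ∃ t : Finset ℂ, (↑t : Set ℂ) ⊆ range w ∪ range (fun i => exp (w i)) ∧ n ≤ t.card ∧
        AlgebraicIndependent F (Subtype.val : {x // x ∈ t} → ℂ))
    {ι : Type*} (B : Finset ι) (lam v : ι → ℂ) (hl : ∀ i ∈ B, lam i ∈ F) (hv : ∀ i ∈ B, v i ∈ F)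
    (hmin : MinZero B (fun i => lam i * exp (v i))) :
    ∀ i ∈ B, ∀ j ∈ B, v i - v j ∈ W := by
  classical
  let π : ℂ →ₗ[ℤ] (ℂ ⧸ W) := W.mkQ.restrictScalars ℤ
  let N : Submodule ℤ ℂ := Submodule.span ℤ (v '' B)
  let G : Submodule ℤ (ℂ ⧸ W) := N.map π
  have hNfg : N.FG := Submodule.fg_span (B.finite_toSet.image v)
  haveI : Module.Finite ℤ G := Module.Finite.iff_fg.2 (hNfg.map π)
  haveI : IsAddTorsionFree (ℂ ⧸ W) := IsAddTorsionFree.of_module_rat _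
  haveI : Module.IsTorsionFree ℤ G := inferInstance
  haveI : Module.Free ℤ G := inferInstance
  let n := Module.finrank ℤ G
  let b : Module.Basis (Fin n) ℤ G := Module.finBasis ℤ G
  have hlift : ∀ j, ∃ w ∈ N, π w = (b j : ℂ ⧸ W) := fun j => by
    have := (b j).2
    rw [Submodule.mem_map] at this
    exact this
  choose w hwN hwb using hlift
  have hNF : ∀ x ∈ N, x ∈ F := by
    intro x hx
    induction hx using Submodule.span_induction with
    | mem x hx => obtain ⟨i, hi, rfl⟩ := hx; exact hv i hi
    | zero => exact F.zero_mem
    | add x y _ _ hx hy => exact F.add_mem hx hy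
    | smul a x _ hx => exact zsmul_mem hx a
  have hind : LinearIndependent ℚ (fun i => W.mkQ (w i)) := by
    rw [← LinearIndependent.iff_fractionRing ℤ ℚ]
    have h1 : LinearIndependent ℤ (fun i => (b i : ℂ ⧸ W)) :=
      b.linearIndependent.map' G.subtype (Submodule.ker_subtype G)
    have h2 : (fun i => W.mkQ (w i)) = (fun i => (b i : ℂ ⧸ W)) := funext hwb
    rw [h2]
    exact h1
  obtain ⟨t, ht, htn, hta⟩ := hai n w hind
  have ht' : t ⊆ Finset.univ.image (fun i => exp (w i)) := by
    intro x hx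
    rcases ht hx with ⟨j, rfl⟩ | ⟨j, rfl⟩
    · exact absurd (hNF _ (hwN j)) (algindep_not_mem hta hx)
    · simp
  have hcard : (Finset.univ.image (fun i => exp (w i))).card = (Finset.univ : Finset (Fin n)).card := by
    refine le_antisymm Finset.card_image_le ?_
    rw [Finset.card_fin]
    exact htn.trans (Finset.card_le_card ht')
  have hteq : t = Finset.univ.image (fun i => exp (w i)) := by
    refine Finset.eq_of_subset_of_card_le ht' ?_
    rw [hcard, Finset.card_fin]; exact htn
  have hinj : Function.Injective (fun i => exp (w i)) := by
    have := Finset.card_image_iff.1 hcard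
    simpa [Set.injOn_univ] using this
  have hai' : AlgebraicIndependent F (fun i => exp (w i)) := by
    have := hta.comp (fun i : Fin n => (⟨exp (w i), by rw [hteq]; simp⟩ : {x // x ∈ t}))
      (fun i j h => hinj (by simpa using h))
    exact this
  have hdec : ∀ i ∈ B, ∃ m : Fin n → ℤ, v i - ∑ j, (m j : ℂ) * w j ∈ W := by
    intro i hi
    let g : G := ⟨π (v i), Submodule.mem_map_of_mem (Submodule.subset_span ⟨i, hi, rfl⟩)⟩
    refine ⟨fun j => b.repr g j, ?_⟩
    have h1 := b.sum_repr g
    have h2 : ∑ j, (b.repr g j) • (b j : ℂ ⧸ W) = π (v i) := by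
      have h5 := congrArg (G.subtype) h1
      rw [map_sum] at h5
      exact h5
    have h3 : π (v i - ∑ j, (b.repr g j) • w j) = 0 := by
      rw [map_sub, map_sum, ← h2, sub_eq_zero]
      refine Finset.sum_congr rfl fun j _ => ?_
      rw [map_smul, hwb]
    have h4 := (Submodule.Quotient.mk_eq_zero W).1 h3
    simpa [zsmul_eq_mul] using h4
  choose! m hm using hdec
  obtain ⟨i0, hi0⟩ := hmin.1
  have key := algindep_int_exp F (fun j => exp (w j)) (fun j => exp_ne_zero _) hai' B
    (fun i => lam i * exp (v i - ∑ j, (m i j : ℂ) * w j))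
    (fun i hi => F.mul_mem (hl i hi) (hWF _ (hm i hi)).2) m
    (by
      rw [← hmin.2.1]
      refine Finset.sum_congr rfl fun i hi => ?_
      have : ∏ j, exp (w j) ^ (m i j) = exp (∑ j, (m i j : ℂ) * w j) := by
        rw [Complex.exp_sum]
        refine Finset.prod_congr rfl fun j _ => ?_
        rw [Complex.exp_int_mul]
      simp only
      rw [this, mul_assoc, ← Complex.exp_add]; ring_nf) (m i0)
  have hsub : ∑ i ∈ B with m i = m i0, lam i * exp (v i) = 0 := by
    have : ∀ i ∈ B.filter (fun i => m i = m i0), lam i * exp (v i)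
      = exp (∑ j, (m i0 j : ℂ) * w j) * (lam i * exp (v i - ∑ j, (m i j : ℂ) * w j)) := by
      intro i hi
      rw [Finset.mem_filter] at hi
      rw [hi.2, mul_left_comm, ← Complex.exp_add]; ring_nf
    rw [Finset.sum_congr rfl this, ← Finset.mul_sum, key, mul_zero]
  have hall : B.filter (fun i => m i = m i0) = B := by
    by_contra hne
    exact hmin.2.2 _ (Finset.filter_subset _ _) ⟨i0, by simp [hi0]⟩ hne hsub
  have hall' : ∀ i ∈ B, m i = m i0 := fun i hi => by
    rw [← hall] at hi; exact (Finset.mem_filter.1 hi).2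
  intro i hi j hj
  have := W.sub_mem (hm i hi) (hm j hj)
  rw [hall' i hi, hall' j hj] at this
  simpa using this


theorem exists_miss {n : ℕ} (J : Finset (Fin (n+1))) (h : n ≤ J.card) :
    ∃ i : Fin (n+1), ∀ j, j ≠ i → j ∈ J := by
  classical
  have h1 : Jᶜ.card ≤ 1 := by
    rw [Finset.card_compl, Fintype.card_fin]; omega
  rcases Finset.eq_empty_or_nonempty Jᶜ with h2 | ⟨i, hi⟩
  · refine ⟨0, fun j _ => ?_⟩
    by_contra hj
    have : j ∈ Jᶜ := Finset.mem_compl.2 hj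
    rw [h2] at this; simp at this
  · refine ⟨i, fun j hj => ?_⟩
    by_contra hj'
    exact hj (Finset.card_le_one.1 h1 j (Finset.mem_compl.2 hj') i hi)

theorem step1a (F : Subfield ℂ) {n : ℕ} (ω : Fin (n+1) → ℂ) (hωF : ∀ j, ω j ∈ F)
    (hω0 : ∀ j, ω j ≠ 0) (z : ℂ) (t : Finset ℂ)
    (ht : (↑t : Set ℂ) ⊆ range (fun j => ω j * z) ∪ range (fun j => exp (ω j * z)))
    (htn : n + 1 ≤ t.card) (hta : AlgebraicIndependent F (Subtype.val : {x // x ∈ t} → ℂ)) :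
    ∃ i : Fin (n+1), AlgebraicIndependent F (fun j : Fin n => exp (ω (i.succAbove j) * z)) := by
  classical
  let t1 := t.filter (fun x => x ∈ range (fun j => ω j * z))
  let t2 := t.filter (fun x => x ∉ range (fun j => ω j * z))
  have hcard : t1.card + t2.card = t.card := Finset.card_filter_add_card_filter_not _
  have h1 : t1.card ≤ 1 := by
    rw [Finset.card_le_one]
    intro a ha b hb
    by_contra hab
    simp only [t1, Finset.mem_filter] at ha hb
    obtain ⟨hat, j, hj⟩ := ha
    obtain ⟨hbt, l, hl⟩ := hb
    let p : MvPolynomial {x // x ∈ t} ℂ :=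
      MvPolynomial.monomial (Finsupp.single ⟨a, hat⟩ 1) (ω l) -
        MvPolynomial.monomial (Finsupp.single ⟨b, hbt⟩ 1) (ω j)
    have hne : (Finsupp.single (⟨b, hbt⟩ : {x // x ∈ t}) 1 : _ →₀ ℕ) ≠ Finsupp.single ⟨a, hat⟩ 1 := by
      intro h
      rw [Finsupp.single_left_inj one_ne_zero] at h
      exact hab (by simpa using h.symm)
    have hp : p = 0 := by
      apply algindep_eval_zero F _ hta
      · intro m
        simp only [p, MvPolynomial.coeff_sub, MvPolynomial.coeff_monomial]
        refine F.sub_mem ?_ ?_ <;> split_ifs <;> first | exact hωF _ | exact F.zero_mem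
      · simp only [p, map_sub, MvPolynomial.eval_monomial]
        simp [← hj, ← hl]; ring
    have h2 : p.coeff (Finsupp.single ⟨a, hat⟩ 1) = 0 := by rw [hp]; simp
    simp only [p, MvPolynomial.coeff_sub, MvPolynomial.coeff_monomial, if_neg hne] at h2
    simp [hω0] at h2
  have h2 : n ≤ t2.card := by omega
  have h3 : ∀ x ∈ t2, ∃ j, exp (ω j * z) = x := by
    intro x hx
    simp only [t2, Finset.mem_filter] at hx
    rcases ht hx.1 with h | h
    · exact absurd h hx.2
    · exact h
  choose! s hs using h3
  have hsinj : Set.InjOn s t2 := by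
    intro x hx y hy h
    rw [← hs x hx, ← hs y hy, h]
  let J := t2.image s
  have hJ : n ≤ J.card := by rw [Finset.card_image_of_injOn hsinj]; exact h2
  obtain ⟨i, hi⟩ := exists_miss J hJ
  have hJ1 : ∀ j ∈ J, exp (ω j * z) ∈ t2 ∧ s (exp (ω j * z)) = j := by
    intro j hj
    obtain ⟨x, hx, rfl⟩ := Finset.mem_image.1 hj
    rw [hs x hx]; exact ⟨hx, rfl⟩
  have hJ2 : ∀ j : Fin n, i.succAbove j ∈ J := fun j => hi _ (Fin.succAbove_ne i j)
  refine ⟨i, ?_⟩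
  exact hta.comp (fun j : Fin n => (⟨exp (ω (i.succAbove j) * z),
      (Finset.mem_filter.1 (hJ1 _ (hJ2 j)).1).1⟩ : {x // x ∈ t}))
    (fun j l h => by
      have h4 : exp (ω (i.succAbove j) * z) = exp (ω (i.succAbove l) * z) := by simpa using h
      have h5 := (hJ1 _ (hJ2 j)).2
      rw [h4, (hJ1 _ (hJ2 l)).2] at h5
      exact (Fin.succAbove_right_injective h5).symm)

theorem step1 (hSC : SchanuelConjecture) {k : ℕ} (ω : Fin k → ℂ) (hω : LinearIndependent ℚ ω)
    (P Q : MvPolynomial (Fin k) ℂ) (hPQ : IsRelPrime P Q) (C : Finset ℂ) :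
    ∃ W : Submodule ℚ ℂ, FiniteDimensional ℚ W ∧ ∀ z : ℂ,
      MvPolynomial.eval (fun j => exp (ω j * z)) P = 0 →
      MvPolynomial.eval (fun j => exp (ω j * z)) Q = 0 →
      ∀ {ι : Type} (B : Finset ι) (lam mu : ι → ℂ), (∀ i ∈ B, lam i ∈ C ∧ mu i ∈ C) →
        MinZero B (fun i => lam i * exp (mu i * z)) →
        ∀ i ∈ B, ∀ j ∈ B, (mu i - mu j) * z ∈ W := by
  classical
  cases k with
  | zero =>
    refine ⟨⊥, inferInstance, fun z h1 h2 => ?_⟩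
    exfalso
    rw [MvPolynomial.eq_C_of_isEmpty P] at h1 hPQ
    rw [MvPolynomial.eq_C_of_isEmpty Q] at h2 hPQ
    rw [MvPolynomial.eval_C] at h1 h2
    rw [h1, h2, map_zero] at hPQ
    exact not_isUnit_zero (hPQ (dvd_refl _) (dvd_refl _))
  | succ n =>
    choose R hR0 A' B' hR using fun i => elim_mv P Q hPQ i
    obtain ⟨W, F, hWfd, hCF, hWF, hFalg, hai⟩ := base_lemma hSC
      (C ∪ Finset.univ.image ω ∪ Finset.univ.biUnion (fun i => (R i).coeffs))
    refine ⟨W, hWfd, fun z hP hQ ι B lam mu hlm hmin => ?_⟩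
    have hωF : ∀ j, ω j ∈ F := fun j => hCF _ (by simp)
    have hRF : ∀ i m, (R i).coeff m ∈ F := by
      intro i m
      by_cases h : (R i).coeff m = 0
      · rw [h]; exact F.zero_mem
      · refine hCF _ ?_
        rw [Finset.mem_union]; right
        rw [Finset.mem_biUnion]
        exact ⟨i, Finset.mem_univ _, MvPolynomial.coeff_mem_coeffs m h⟩
    have hz : z ∈ F := by
      by_cases hli : LinearIndependent ℚ (fun i => W.mkQ (ω i * z))
      · exfalso
        obtain ⟨t, ht, htn, hta⟩ := hai (n+1) (fun i => ω i * z) hli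
        obtain ⟨i, hi⟩ := step1a F ω hωF (fun j => hω.ne_zero j) z t ht htn hta
        apply hR0 i
        apply algindep_eval_zero F _ hi _ (hRF i)
        have := congrArg (MvPolynomial.eval (fun j => exp (ω j * z))) (hR i)
        rw [map_add, map_mul, map_mul, hP, hQ, MvPolynomial.eval_rename] at this
        rw [mul_zero, mul_zero, add_zero] at this
        exact this.symm
      · rw [Fintype.not_linearIndependent_iff] at hli
        obtain ⟨g, hg, j, hj⟩ := hli
        have h1 : ∑ i, g i • (ω i * z) ∈ W := by
          rw [← Submodule.Quotient.mk_eq_zero, ← Submodule.mkQ_apply, map_sum]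
          simpa using hg
        have h2 : ∑ i, g i • (ω i * z) = (∑ i, g i • ω i) * z := by
          rw [Finset.sum_mul]; simp [mul_assoc, Rat.smul_def]
        have h3 : ∑ i, g i • ω i ≠ 0 := fun h =>
          hj (Fintype.linearIndependent_iff.1 hω g h j)
        have h4 : ∑ i, g i • ω i ∈ F := sum_mem fun i _ => by
          rw [Rat.smul_def]; exact F.mul_mem (SubfieldClass.ratCast_mem F _) (hωF i)
        rw [h2] at h1
        have h5 := F.mul_mem (F.inv_mem h4) (hWF _ h1).1
        rwa [inv_mul_cancel_left₀ h3] at h5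
    have := lemD W F hWF hai B lam (fun i => mu i * z)
      (fun i hi => hCF _ (by simp [(hlm i hi).1]))
      (fun i hi => F.mul_mem (hCF _ (by simp [(hlm i hi).2])) hz) hmin
    intro i hi j hj
    rw [sub_mul]; exact this i hi j hj


theorem sc_algindep_fin (hSC : SchanuelConjecture) {n : ℕ} (w : Fin n → ℂ)
    (hw : LinearIndependent ℚ w) (he : ∀ i, IsAlgebraic ℚ (exp (w i))) : AlgebraicIndependent ℚ w := by
  classical
  obtain ⟨t, ht, htn, hta⟩ := sc_finset hSC w hw
  have ht' : t ⊆ Finset.univ.image w := by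
    intro x hx
    rcases ht hx with ⟨j, rfl⟩ | ⟨j, rfl⟩
    · simp
    · exact absurd (he j) (hta.transcendental ⟨_, hx⟩)
  have hteq : t = Finset.univ.image w := by
    refine Finset.eq_of_subset_of_card_le ht' ?_
    exact Finset.card_image_le.trans (by rw [Finset.card_fin]; exact htn)
  exact hta.comp (fun i : Fin n => (⟨w i, by rw [hteq]; simp⟩ : {x // x ∈ t}))
      (fun i j h => hw.injective (by simpa using h))

theorem sc_algindep (hSC : SchanuelConjecture) {ι : Type*} [Finite ι] (w : ι → ℂ)
    (hw : LinearIndependent ℚ w) (he : ∀ i, IsAlgebraic ℚ (exp (w i))) : AlgebraicIndependent ℚ w := by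
  obtain ⟨n, ⟨e⟩⟩ := Finite.exists_equiv_fin ι
  have := sc_algindep_fin hSC (w ∘ e.symm) (hw.comp _ e.symm.injective) (fun i => he _)
  have h2 := this.comp e e.injective
  simpa [Function.comp_assoc] using h2

theorem four_exp (hSC : SchanuelConjecture) (a b z1 z2 : ℂ) (ha : a ≠ 0) (hz : z1 ≠ 0)
    (hab : ∀ c : ℚ, b ≠ c * a) (hzz : ∀ c : ℚ, z2 ≠ c * z1)
    (h1 : IsAlgebraic ℚ (exp (a * z1))) (h2 : IsAlgebraic ℚ (exp (a * z2)))
    (h3 : IsAlgebraic ℚ (exp (b * z1))) (h4 : IsAlgebraic ℚ (exp (b * z2))) : False := by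
  classical
  let w : Fin 4 → ℂ := ![a * z1, a * z2, b * z1, b * z2]
  have he : ∀ i, IsAlgebraic ℚ (exp (w i)) := by
    intro i; fin_cases i <;> simp [w, h1, h2, h3, h4]
  have hs : LinearIndepOn ℚ w {0} := by
    rw [linearIndepOn_singleton_iff]; simp [w, ha, hz]
  obtain ⟨B, -, h0B, hspan, hB⟩ := exists_linearIndepOn_extension hs (Set.subset_univ _)
  have h0B : (0 : Fin 4) ∈ B := h0B rfl
  have hai : AlgebraicIndependent ℚ (fun i : B => w i) := sc_algindep hSC _ hB (fun i => he i)
  have hlin : ∀ i, ∃ c : B → ℚ, ∑ j, c j • w j = w i := by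
    intro i
    have : w i ∈ Submodule.span ℚ (range (fun i : B => w i)) := by
      have h := hspan (mem_image_of_mem w (mem_univ i))
      rwa [image_eq_range] at h
    exact (Submodule.mem_span_range_iff_exists_fun ℚ).1 this
  choose c hc using hlin
  let L : Fin 4 → MvPolynomial B ℚ := fun i => ∑ j, MvPolynomial.C (c i j) * MvPolynomial.X j
  have hL : ∀ i, MvPolynomial.aeval (fun i : B => w i) (L i) = w i := by
    intro i
    rw [← hc i]; simp [L, Algebra.smul_def]
  have hinj : Function.Injective (MvPolynomial.aeval (R := ℚ) (fun i : B => w i)) := hai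
  have hL0 : L 0 = MvPolynomial.X ⟨0, h0B⟩ := hinj (by rw [hL]; simp)
  have hrel : L 0 * L 3 = L 1 * L 2 := by
    apply hinj
    rw [map_mul, map_mul, hL, hL, hL, hL]
    simp [w]; ring
  have hdvd : ∀ i, MvPolynomial.X ⟨0, h0B⟩ ∣ L i → ∃ q : ℚ, w i = q * w 0 := by
    intro i ⟨r, hr⟩
    refine ⟨c i ⟨0, h0B⟩, ?_⟩
    rw [← hc i, Finset.sum_eq_single (⟨0, h0B⟩ : B)]
    · rw [Rat.smul_def]
    · intro j _ hj
      have h5 : (L i).coeff (Finsupp.single j 1) = c i j := by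
        simp only [L, MvPolynomial.coeff_sum, MvPolynomial.coeff_C_mul]
        rw [Finset.sum_eq_single j]
        · simp [MvPolynomial.coeff_X']
        · intro l _ hl
          rw [MvPolynomial.coeff_X', if_neg, mul_zero]
          rw [Finsupp.single_left_inj one_ne_zero]; exact hl
        · simp
      rw [hr, MvPolynomial.coeff_X_mul'] at h5
      rw [← h5, if_neg, zero_smul]
      simp only [Finsupp.mem_support_iff, ne_eq, not_not]
      exact Finsupp.single_eq_of_ne (Ne.symm hj)
    · simp
  have hp : Prime (MvPolynomial.X ⟨0, h0B⟩ : MvPolynomial B ℚ) := MvPolynomial.X_prime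
  rcases hp.dvd_or_dvd (by rw [← hrel, hL0]; exact dvd_mul_right _ _ : _ ∣ L 1 * L 2) with h | h
  · obtain ⟨q, hq⟩ := hdvd 1 h
    apply hzz q
    simp [w] at hq
    apply mul_left_cancel₀ ha
    rw [hq]; ring
  · obtain ⟨q, hq⟩ := hdvd 2 h
    apply hab q
    simp [w] at hq
    apply mul_right_cancel₀ hz
    rw [hq]; ring


open Polynomial WithZero in
theorem sml0 {K : Type*} [Field K] [CharZero K] (v : Valuation K ℤᵐ⁰) (p : ℕ) [hpf : Fact p.Prime]
    (hp2 : p ≠ 2) (hvp : v (p : K) < 1) (hvs : ∀ s : ℕ, ¬ p ∣ s → v (s : K) = 1)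
    (hvz : ∀ n : ℤ, v (n : K) ≤ 1) {ι : Type*} [Fintype ι] (C' t : ι → K) (ht : ∀ i, v (t i) ≤ 1)
    (T : Set ℕ) (hT : T.Infinite) (h0 : ∀ k ∈ T, ∑ i, C' i * (1 + p * t i) ^ k = 0) (k : ℕ) :
    ∑ i, C' i * (1 + p * t i) ^ k = 0 := by
  classical
  have hp0 : (p : K) ≠ 0 := by exact_mod_cast hpf.out.ne_zero
  -- the coefficients
  let b : ℕ → K := fun l => ∑ i, C' i * t i ^ l
  let d : ℕ → K := fun l => (p : K) ^ l * b l / (l.factorial : K)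
  have hφ : ∀ n L : ℕ, n ≤ L → ∑ i, C' i * (1 + p * t i) ^ n
      = (∑ l ∈ Finset.range (L+1), C (d l) * descPochhammer K l).eval (n : K) := by
    intro n L hn
    rw [eval_finset_sum]
    have h1 : ∀ l, eval (n : K) (C (d l) * descPochhammer K l) = (n.choose l : K) * (p : K) ^ l * b l := by
      intro l
      rw [eval_mul, eval_C, descPochhammer_eval_eq_descFactorial, Nat.descFactorial_eq_factorial_mul_choose]
      have : (l.factorial : K) ≠ 0 := by exact_mod_cast l.factorial_ne_zero
      simp only [d]; push_cast; field_simp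
    simp only [h1]
    have h2 : ∑ l ∈ Finset.range (L+1), (n.choose l : K) * (p : K) ^ l * b l
        = ∑ l ∈ Finset.range (n+1), (n.choose l : K) * (p : K) ^ l * b l := by
      symm
      apply Finset.sum_subset
      · intro l; simp only [Finset.mem_range]; omega
      · intro l _ hl
        rw [Nat.choose_eq_zero_of_lt (by simpa using hl)]; simp
    rw [h2]
    simp only [b, Finset.mul_sum]
    rw [Finset.sum_comm]
    refine Finset.sum_congr rfl fun i _ => ?_
    rw [add_comm, add_pow, Finset.mul_sum]
    refine Finset.sum_congr rfl fun l _ => ?_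
    rw [mul_pow]; ring
  -- bound on d
  obtain ⟨c, hc⟩ : ∃ c : ℤᵐ⁰, ∀ i, v (C' i) ≤ c := by
    obtain ⟨c, hc⟩ := (Set.finite_range (fun i => v (C' i))).bddAbove
    exact ⟨c, fun i => hc ⟨i, rfl⟩⟩
  have hb : ∀ l, v (b l) ≤ c := by
    intro l
    refine v.map_sum_le fun i _ => ?_
    rw [map_mul, map_pow]
    calc v (C' i) * v (t i) ^ l ≤ c * 1 := mul_le_mul' (hc i) (pow_le_one₀ zero_le' (ht i))
      _ = c := mul_one c
  have hd : ∀ m l : ℕ, 2 * m ≤ l → v (d l) ≤ v (p : K) ^ m * c := by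
    intro m l hml
    obtain ⟨w, u, hu⟩ := Nat.exists_eq_pow_mul_and_not_dvd (Nat.factorial_ne_zero l) p hpf.out.ne_one
    have hval : padicValNat p l.factorial = w := by
      rw [hu.2, padicValNat.mul (pow_ne_zero _ hpf.out.ne_zero) (by rintro rfl; simp at hu),
        padicValNat.prime_pow, padicValNat.eq_zero_of_not_dvd hu.1, add_zero]
    have h3 := sub_one_mul_padicValNat_factorial (p := p) l
    rw [hval] at h3
    have h4 : 2 ≤ p - 1 := by have := hpf.out.two_le; omega
    have h5 : 2 * w ≤ l := by
      calc 2 * w ≤ (p-1) * w := Nat.mul_le_mul_right _ h4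
        _ ≤ l := by rw [h3]; omega
    have h6 : v (d l) = v (p:K) ^ (l - w) * v (b l) := by
      simp only [d]
      rw [hu.2]; push_cast
      rw [map_div₀, map_mul, map_mul, map_pow, map_pow, hvs u hu.1, mul_one]
      have hv0 : v (p : K) ≠ 0 := (v.ne_zero_iff).2 hp0
      rw [div_eq_iff (pow_ne_zero _ hv0)]
      rw [mul_right_comm, ← pow_add, Nat.sub_add_cancel (by omega)]
    rw [h6]
    exact mul_le_mul' (pow_le_pow_right_of_le_one' hvp.le (by omega)) (hb l)
  by_contra hne
  set φ := ∑ i, C' i * (1 + p * t i) ^ k with hφdef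
  have hmain : ∀ m : ℕ, v φ ≤ v (p : K) ^ m * c := by
    intro m
    obtain ⟨N, hNT, hNc⟩ := hT.exists_subset_card_eq (2 * m)
    let L := max k (N.sup id)
    let Qz : ℤ[X] := ∏ n ∈ N, (X - C (n : ℤ))
    have hQz : Qz.Monic := monic_prod_of_monic _ _ fun n _ => monic_X_sub_C _
    have hQdeg : Qz.natDegree = 2 * m := by
      simp only [Qz]
      rw [natDegree_prod_of_monic _ _ fun n _ => monic_X_sub_C _]
      rw [Finset.sum_congr rfl (fun n _ => natDegree_X_sub_C _)]
      simp [hNc]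
    let Q : K[X] := Qz.map (Int.castRingHom K)
    have hQ : Q = ∏ n ∈ N, (X - C (n : K)) := by
      simp [Q, Qz, Polynomial.map_prod]
    let P := ∑ l ∈ Finset.range (L+1), C (d l) * descPochhammer K l
    have hdvd : Q ∣ P := by
      rw [hQ]
      refine Finset.prod_dvd_of_coprime ?_ ?_
      · intro a _ b _ hab
        refine pairwise_coprime_X_sub_C (s := fun n : ℕ => (n : K)) Nat.cast_injective hab
      · intro n hn
        rw [dvd_iff_isRoot, IsRoot, ← hφ n L (le_max_of_le_right (Finset.le_sup (f := id) hn))]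
        exact h0 n (hNT hn)
    have hQm : Q.Monic := hQz.map _
    have hP : P = Q * ∑ l ∈ Finset.range (L+1),
        C (d l) * (descPochhammer ℤ l /ₘ Qz).map (Int.castRingHom K) := by
      set A := ∑ l ∈ Finset.range (L+1),
        C (d l) * (descPochhammer ℤ l /ₘ Qz).map (Int.castRingHom K) with hA
      let Rm := ∑ l ∈ Finset.range (L+1),
        C (d l) * (descPochhammer ℤ l %ₘ Qz).map (Int.castRingHom K)
      have h7 : P = Rm + Q * A := by
        simp only [P, Rm, hA, Finset.mul_sum]
        rw [← Finset.sum_add_distrib]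
        refine Finset.sum_congr rfl fun l _ => ?_
        have h10 := congrArg (Polynomial.map (Int.castRingHom K)) (modByMonic_add_div (descPochhammer ℤ l) Qz)
        rw [Polynomial.map_add, Polynomial.map_mul, descPochhammer_map] at h10
        rw [← h10]; ring
      have h11 : Rm = 0 := by
        apply eq_zero_of_dvd_of_degree_lt (p := Q)
        · have : Q ∣ Rm + Q * A := h7 ▸ hdvd
          exact (dvd_add_left (dvd_mul_right _ _)).1 this
        · have hQd : Q.degree = Qz.degree := degree_map_eq_of_injective (Int.cast_injective) _
          rw [hQd]
          refine (degree_sum_le _ _).trans_lt ?_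
          rw [Finset.sup_lt_iff (bot_lt_iff_ne_bot.2 (by rw [Ne, degree_eq_bot]; exact hQz.ne_zero))]
          intro l _
          calc _ ≤ degree (Polynomial.map (Int.castRingHom K) (descPochhammer ℤ l %ₘ Qz)) := by
                rw [degree_mul]
                exact (add_le_add_left degree_C_le _).trans (by rw [zero_add])
            _ ≤ degree (descPochhammer ℤ l %ₘ Qz) := degree_map_le
            _ < _ := degree_modByMonic_lt _ hQz
      rw [h7, h11, zero_add]
    have h8 : φ = P.eval (k : K) := hφ k L (le_max_left _ _)
    rw [h8, hP, eval_mul, map_mul]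
    have h9 : v (eval (k : K) Q) ≤ 1 := by
      have : eval (k : K) Q = ((eval (k : ℤ) Qz : ℤ) : K) := by
        simp only [Q]
        rw [eval_natCast_map]; simp
      rw [this]; exact hvz _
    have h12 : v (eval (k : K) (∑ l ∈ Finset.range (L+1),
        C (d l) * (descPochhammer ℤ l /ₘ Qz).map (Int.castRingHom K))) ≤ v (p : K) ^ m * c := by
      rw [eval_finset_sum]
      refine v.map_sum_le fun l _ => ?_
      by_cases hl : l < 2 * m
      · rw [(divByMonic_eq_zero_iff hQz).2]
        · simp
        · apply degree_lt_degree
          rw [descPochhammer_natDegree, hQdeg]; exact hl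
      · rw [eval_mul, eval_C, map_mul, eval_natCast_map]
        calc _ ≤ v (p : K) ^ m * c * 1 := mul_le_mul' (hd m l (by omega)) (hvz _)
          _ = _ := mul_one _
    calc _ ≤ 1 * (v (p : K) ^ m * c) := mul_le_mul' h9 h12
      _ = _ := one_mul _
  have hφ0 : v φ ≠ 0 := (v.ne_zero_iff).2 hne
  have hc0 : c ≠ 0 := by
    rintro rfl
    have := hmain 0
    simp at this
    exact hne this
  obtain ⟨n, hn⟩ := exists_pow_lt₀ hvp (Units.mk0 (v φ / c) (div_ne_zero hφ0 hc0))
  have h13 := hmain n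
  rw [Units.val_mk0, lt_div_iff₀ (zero_lt_iff.2 hc0)] at hn
  exact absurd h13 (not_le.2 hn)


open Polynomial in
theorem class_sums {K : Type*} [Field K] {ι : Type*} [Fintype ι] [DecidableEq K] (c ξ : ι → K)
    (h : ∀ k : ℕ, ∑ i, c i * ξ i ^ k = 0) (η : K) : ∑ i with ξ i = η, c i = 0 := by
  classical
  have hP : ∀ P : K[X], ∑ i, c i * P.eval (ξ i) = 0 := by
    intro P
    induction P using Polynomial.induction_on' with
    | add p q hp hq =>
      simp only [eval_add, mul_add, Finset.sum_add_distrib, hp, hq, add_zero]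
    | monomial n a =>
      have : ∀ i, c i * eval (ξ i) (monomial n a) = a * (c i * ξ i ^ n) := by
        intro i; rw [eval_monomial]; ring
      simp only [this, ← Finset.mul_sum, h, mul_zero]
  let s := (Finset.univ.image ξ).erase η
  let P : K[X] := ∏ a ∈ s, (X - C a)
  have h1 : P.eval η ≠ 0 := by
    simp only [P, eval_prod, eval_sub, eval_X, eval_C]
    rw [Finset.prod_ne_zero_iff]
    intro a ha
    rw [sub_ne_zero]
    exact (Finset.ne_of_mem_erase ha).symm
  have h2 : ∀ i, ξ i ≠ η → P.eval (ξ i) = 0 := by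
    intro i hi
    simp only [P, eval_prod, eval_sub, eval_X, eval_C]
    refine Finset.prod_eq_zero (i := ξ i) ?_ (sub_self _)
    exact Finset.mem_erase.2 ⟨hi, Finset.mem_image_of_mem _ (Finset.mem_univ _)⟩
  have h3 := hP P
  have h4 : ∑ i, c i * P.eval (ξ i) = (∑ i with ξ i = η, c i) * P.eval η := by
    rw [Finset.sum_mul, Finset.sum_filter]
    refine Finset.sum_congr rfl fun i _ => ?_
    split_ifs with hi
    · rw [hi]
    · rw [h2 i hi, mul_zero]
  rw [h4] at h3
  exact (mul_eq_zero.1 h3).resolve_right h1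

open WithZero NumberField IsDedekindDomain in
theorem sml_prep (K : Type*) [Field K] [NumberField K] {ι : Type*} [Fintype ι] (x : ι → K)
    (hx : ∀ i, x i ≠ 0) : ∃ (v : Valuation K ℤᵐ⁰) (p : ℕ) (_ : Fact p.Prime) (M : ℕ) (t : ι → K),
      p ≠ 2 ∧ v (p : K) < 1 ∧ (∀ s : ℕ, ¬ p ∣ s → v (s : K) = 1) ∧ (∀ n : ℤ, v (n : K) ≤ 1) ∧
      0 < M ∧ (∀ i, x i ^ M = 1 + p * t i) ∧ (∀ i, v (t i) ≤ 1) := by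
  classical
  have hint : ∀ y : K, ∃ d : ℤ, d ≠ 0 ∧ IsIntegral ℤ ((d : K) * y) := by
    intro y
    have : IsAlgebraic ℤ y := (IsFractionRing.isAlgebraic_iff ℤ ℚ K).2 (Algebra.IsAlgebraic.isAlgebraic y)
    obtain ⟨d, hd, h⟩ := this.exists_integral_multiple
    exact ⟨d, hd, by simpa [zsmul_eq_mul] using h⟩
  choose d hd0 hd using fun i => hint (x i)
  choose e he0 he using fun i => hint (x i)⁻¹
  let D : ℤ := ∏ i, (d i * e i)
  have hD0 : D ≠ 0 := Finset.prod_ne_zero_iff.2 fun i _ => mul_ne_zero (hd0 i) (he0 i)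
  have hcast : ∀ n : ℤ, IsIntegral ℤ (n : K) := fun n => by
    simpa using (isIntegral_algebraMap (R := ℤ) (A := K) (x := n))
  have hDx : ∀ i, IsIntegral ℤ ((D : K) * x i) := by
    intro i
    obtain ⟨r, hr⟩ : d i ∣ D := (dvd_mul_right _ _).trans (Finset.dvd_prod_of_mem _ (Finset.mem_univ i))
    rw [hr]; push_cast
    rw [mul_right_comm]; exact (hd i).mul (hcast r)
  have hDy : ∀ i, IsIntegral ℤ ((D : K) * (x i)⁻¹) := by
    intro i
    obtain ⟨r, hr⟩ : e i ∣ D := (dvd_mul_left _ _).trans (Finset.dvd_prod_of_mem _ (Finset.mem_univ i))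
    rw [hr]; push_cast
    rw [mul_right_comm]; exact (he i).mul (hcast r)
  obtain ⟨p, hp, hpp⟩ := Nat.exists_infinite_primes (D.natAbs + 3)
  haveI : Fact p.Prime := ⟨hpp⟩
  have hpD : ¬ (p : ℤ) ∣ D := by
    intro h
    have := Nat.le_of_dvd (Int.natAbs_pos.2 hD0) (Int.natCast_dvd.1 h)
    omega
  obtain ⟨α, hα⟩ : ∃ α : ι → 𝓞 K, ∀ i, algebraMap (𝓞 K) K (α i) = (D : K) * x i :=
    ⟨fun i => ⟨(D : K) * x i, hDx i⟩, fun i => rfl⟩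
  obtain ⟨β, hβ⟩ : ∃ β : ι → 𝓞 K, ∀ i, algebraMap (𝓞 K) K (β i) = (D : K) * (x i)⁻¹ :=
    ⟨fun i => ⟨(D : K) * (x i)⁻¹, hDy i⟩, fun i => rfl⟩
  have hαβ : ∀ i, α i * β i = (D : 𝓞 K) * D := by
    intro i
    apply RingOfIntegers.ext
    change algebraMap (𝓞 K) K (α i * β i) = algebraMap (𝓞 K) K (D * D)
    rw [map_mul, hα, hβ, map_mul, map_intCast]
    have := hx i
    field_simp
  let I : Ideal (𝓞 K) := Ideal.span {(p : 𝓞 K)}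
  have hp0 : (p : 𝓞 K) ≠ 0 := by exact_mod_cast hpp.ne_zero
  haveI hfin : Finite (𝓞 K ⧸ I) := I.finiteQuotientOfFreeOfNeBot (by simpa [I, Ideal.span_singleton_eq_bot] using hp0)
  have hIp : ∀ y : 𝓞 K, Ideal.Quotient.mk I y = 0 ↔ ∃ r, y = p * r := by
    intro y
    rw [Ideal.Quotient.eq_zero_iff_mem, Ideal.mem_span_singleton]; rfl
  have hpnu : ¬ IsUnit (p : 𝓞 K) := by
    intro h
    obtain ⟨r, hr⟩ := h.exists_right_inv
    have h1 : ((p : K))⁻¹ = algebraMap (𝓞 K) K r := by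
      have h2 := congrArg (algebraMap (𝓞 K) K) hr
      rw [map_mul, map_natCast, map_one] at h2
      exact (eq_inv_of_mul_eq_one_right h2).symm
    have h3 : IsIntegral ℤ ((p : ℚ)⁻¹) := by
      have h4 : IsIntegral ℤ ((p : K))⁻¹ := by rw [h1]; exact r.isIntegral_coe
      have h5 : ((p : K))⁻¹ = algebraMap ℚ K ((p : ℚ)⁻¹) := by simp
      rw [h5] at h4
      exact (isIntegral_algebraMap_iff (algebraMap ℚ K).injective).1 h4
    obtain ⟨n, hn⟩ := IsIntegrallyClosed.isIntegral_iff.1 h3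
    have hpq : (p : ℚ) ≠ 0 := by exact_mod_cast hpp.ne_zero
    have h6 : (n : ℚ) * p = 1 := by
      have : (n : ℚ) = (p : ℚ)⁻¹ := by simpa using hn
      rw [this, inv_mul_cancel₀ hpq]
    have h7 : n * p = 1 := by exact_mod_cast h6
    have h8 : (p : ℤ) ∣ 1 := ⟨n, by rw [mul_comm]; exact h7.symm⟩
    have := Int.le_of_dvd one_pos h8
    have := hpp.two_le
    omega
  obtain ⟨m, hm, hpm⟩ := exists_max_ideal_of_mem_nonunits (mem_nonunits_iff.2 hpnu)
  let w : HeightOneSpectrum (𝓞 K) := ⟨m, hm.isPrime, by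
    rintro rfl
    exact hp0 (by simpa using hpm)⟩
  have hone : ∀ s : ℤ, ¬ (p : ℤ) ∣ s → (w.valuation K) (s : K) = 1 := by
    intro s hs
    have h1 : (s : K) = algebraMap (𝓞 K) K (s : 𝓞 K) := by simp
    rw [h1, HeightOneSpectrum.valuation_eq_one_iff_notMem]
    intro hsm
    obtain ⟨a, b, hab⟩ := (Nat.prime_iff_prime_int.1 hpp).coprime_iff_not_dvd.2 hs
    apply hm.ne_top
    rw [Ideal.eq_top_iff_one]
    have h2 : (1 : 𝓞 K) = a * p + b * s := by exact_mod_cast congrArg (Int.cast (R := 𝓞 K)) hab.symm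
    rw [h2]
    exact m.add_mem (m.mul_mem_left _ hpm) (m.mul_mem_left _ hsm)
  have hDu : IsUnit (Ideal.Quotient.mk I (D : 𝓞 K)) := by
    obtain ⟨a, b, hab⟩ := (Nat.prime_iff_prime_int.1 hpp).coprime_iff_not_dvd.2 hpD
    have h2 : (a : 𝓞 K) * p + b * D = 1 := by exact_mod_cast congrArg (Int.cast (R := 𝓞 K)) hab
    have h3 := congrArg (Ideal.Quotient.mk I) h2
    rw [map_add, (hIp _).2 ⟨a, mul_comm _ _⟩, zero_add, map_mul, map_one] at h3
    exact IsUnit.of_mul_eq_one_right _ h3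
  have hαu : ∀ i, IsUnit (Ideal.Quotient.mk I (α i)) := by
    intro i
    have h1 := congrArg (Ideal.Quotient.mk I) (hαβ i)
    rw [map_mul, map_mul] at h1
    exact isUnit_of_mul_isUnit_left (h1 ▸ hDu.mul hDu)
  let M := Nat.card (𝓞 K ⧸ I)ˣ
  have hpow : ∀ y : 𝓞 K, IsUnit (Ideal.Quotient.mk I y) → ∃ r, y ^ M = 1 + p * r := by
    intro y hy
    obtain ⟨u, hu⟩ := hy
    have h1 : u ^ M = 1 := pow_card_eq_one'
    have h2 : Ideal.Quotient.mk I (y ^ M - 1) = 0 := by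
      rw [map_sub, map_pow, ← hu, ← Units.val_pow_eq_pow_val, h1]; simp
    obtain ⟨r, hr⟩ := (hIp _).1 h2
    exact ⟨r, by rw [← hr]; ring⟩
  choose r hr using fun i => hpow (α i) (hαu i)
  obtain ⟨s, hs⟩ := hpow _ hDu
  have hDK : (D : K) ≠ 0 := by exact_mod_cast hD0
  refine ⟨w.valuation K, p, inferInstance, M, fun i => ((r i : K) - (s : K)) / (D : K) ^ M, by omega,
    ?_, ?_, ?_, Nat.card_pos, ?_, ?_⟩
  · have : (p : K) = algebraMap (𝓞 K) K (p : 𝓞 K) := by simp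
    rw [this, HeightOneSpectrum.valuation_lt_one_iff_mem]
    exact hpm
  · intro n hn
    have := hone n (by exact_mod_cast hn)
    simpa using this
  · intro n
    have : (n : K) = algebraMap (𝓞 K) K (n : 𝓞 K) := by simp
    rw [this]; exact HeightOneSpectrum.valuation_le_one _ _
  · intro i
    have h1 := congrArg (algebraMap (𝓞 K) K) (hr i)
    have h2 := congrArg (algebraMap (𝓞 K) K) hs
    simp only [hα, map_pow, map_add, map_mul, map_one, map_natCast, map_intCast] at h1 h2
    rw [mul_pow] at h1
    have h3 : x i ^ M = (1 + p * (r i : K)) / (D : K) ^ M := by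
      rw [← h1]; field_simp
    rw [h3]
    field_simp
    rw [h2]; ring
  · intro i
    rw [map_div₀, map_pow, hone D hpD, one_pow, div_one]
    have : (r i : K) - (s : K) = algebraMap (𝓞 K) K (r i - s) := by simp
    rw [this]; exact HeightOneSpectrum.valuation_le_one _ _

theorem sml (K : Type*) [Field K] [NumberField K] [DecidableEq K] {ι : Type*} [Fintype ι] (x : ι → K)
    (hx : ∀ i, x i ≠ 0) : ∃ M : ℕ, 0 < M ∧ ∀ T : Set ℕ, T.Infinite → ∃ n ∈ T, ∀ c : ι → K,
      (∀ n ∈ T, ∑ i, c i * x i ^ n = 0) → ∀ ξ, ∑ i with x i ^ M = ξ, c i * x i ^ n = 0 := by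
  classical
  obtain ⟨v, p, hp, M, t, h1, h2, h3, h4, hM, ht, htv⟩ := sml_prep K x hx
  refine ⟨M, hM, fun T hT => ?_⟩
  obtain ⟨r, hr⟩ : ∃ r, {n | n ∈ T ∧ n % M = r}.Infinite := by
    by_contra hcon
    push Not at hcon
    apply hT
    refine ((Set.finite_Iio M).biUnion (t := fun r => {n | n ∈ T ∧ n % M = r})
      (fun r _ => hcon r)).subset ?_
    intro n hn
    simp only [Set.mem_iUnion]
    exact ⟨n % M, Nat.mod_lt _ hM, hn, rfl⟩
  obtain ⟨n0, hn0⟩ := hr.nonempty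
  refine ⟨n0, hn0.1, fun c hc ξ => ?_⟩
  have hTinf : {k : ℕ | r + M * k ∈ T}.Infinite := by
    intro hfin
    apply hr
    refine (hfin.image (fun k => r + M * k)).subset ?_
    rintro n ⟨hn, hnr⟩
    refine ⟨n / M, ?_, ?_⟩
    · simp only [Set.mem_setOf_eq, ← hnr, Nat.mod_add_div]; exact hn
    · simp only [← hnr, Nat.mod_add_div]
  have hall := sml0 v p h1 h2 h3 h4 (fun i => c i * x i ^ r) t htv _ hTinf (fun k hk => by
    rw [← hc _ hk]
    refine Finset.sum_congr rfl fun i _ => ?_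
    rw [← ht i]; ring)
  have hcl := class_sums (fun i => c i * x i ^ r) (fun i => x i ^ M) (fun k => by
    rw [← hall k]
    refine Finset.sum_congr rfl fun i _ => ?_
    rw [← ht i]) ξ
  have : ∀ i ∈ Finset.univ.filter (fun i => x i ^ M = ξ), c i * x i ^ n0
      = (c i * x i ^ r) * ξ ^ (n0 / M) := by
    intro i hi
    rw [← (Finset.mem_filter.1 hi).2]
    conv_lhs => rw [← Nat.mod_add_div n0 M, hn0.2]
    ring
  rw [Finset.sum_congr rfl this, ← Finset.sum_mul, hcl, zero_mul]


theorem kummer {F Ω : Type*} [Field F] [Field Ω] [Algebra F Ω] [IsGalois F Ω] {b : ℕ} (hb : 0 < b)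
    (ζ : Ω) (hζ : IsPrimitiveRoot ζ b) (x : F) (u : Ω) (hu0 : u ≠ 0) (hu : u ^ b = algebraMap F Ω x)
    (hfix : ∀ σ : Ω ≃ₐ[F] Ω, σ ζ = ζ → σ u = u) :
    ∃ e : ℕ, 0 < e ∧ (∃ η : F, IsPrimitiveRoot η e) ∧ ∃ f : F, f ^ b = x ^ e := by
  classical
  haveI : NeZero b := ⟨hb.ne'⟩
  have hζ0 : ζ ≠ 0 := hζ.ne_zero hb.ne'
  have hF : ∀ y : Ω, (∀ σ : Ω ≃ₐ[F] Ω, σ y = y) → ∃ f : F, algebraMap F Ω f = y := by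
    intro y hy
    exact (InfiniteGalois.mem_range_algebraMap_iff_fixed y).2 hy
  have hpw : ∀ y : Ω, y ^ b = 1 → ∃ k : ℕ, y = ζ ^ k := by
    intro y hy
    obtain ⟨i, _, hi⟩ := hζ.eq_pow_of_pow_eq_one hy
    exact ⟨i, hi.symm⟩
  have hc : ∀ σ : Ω ≃ₐ[F] Ω, ∃ k : ℕ, σ ζ = ζ ^ k := fun σ => hpw _ (by
    rw [← map_pow, hζ.pow_eq_one, map_one])
  choose c hc using hc
  have hz : ∀ σ : Ω ≃ₐ[F] Ω, ∃ k : ℕ, σ u = ζ ^ k * u := fun σ => by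
    obtain ⟨k, hk⟩ := hpw (σ u / u) (by
      rw [div_pow, ← map_pow, hu, AlgEquiv.commutes, ← hu, div_self (pow_ne_zero _ hu0)])
    exact ⟨k, by rw [← hk, div_mul_cancel₀ _ hu0]⟩
  choose z hz using hz
  have hcomm : ∀ σ τ : Ω ≃ₐ[F] Ω, σ (τ u) = τ (σ u) := by
    intro σ τ
    have h1 : σ (τ ζ) = τ (σ ζ) := by
      rw [hc, hc, map_pow, map_pow, hc, hc, ← pow_mul, ← pow_mul, mul_comm]
    have h2 := hfix ((τ * σ)⁻¹ * (σ * τ)) (by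
      rw [AlgEquiv.mul_apply, AlgEquiv.mul_apply, h1, ← AlgEquiv.mul_apply τ σ, ← AlgEquiv.mul_apply]
      simp)
    rw [AlgEquiv.mul_apply, AlgEquiv.mul_apply] at h2
    have h3 := congrArg (τ * σ) h2
    rw [← AlgEquiv.mul_apply, mul_inv_cancel, AlgEquiv.one_apply, AlgEquiv.mul_apply] at h3
    exact h3
  let I : AddSubgroup ℤ :=
    { carrier := {e | ∃ f : F, ∃ k : ℤ, f ≠ 0 ∧ u ^ e = algebraMap F Ω f * ζ ^ k}
      zero_mem' := ⟨1, 0, one_ne_zero, by simp⟩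
      add_mem' := by
        rintro e e' ⟨f, k, hf, h⟩ ⟨f', k', hf', h'⟩
        refine ⟨f * f', k + k', mul_ne_zero hf hf', ?_⟩
        rw [zpow_add₀ hu0, h, h', zpow_add₀ hζ0, map_mul]; ring
      neg_mem' := by
        rintro e ⟨f, k, hf, h⟩
        refine ⟨f⁻¹, -k, inv_ne_zero hf, ?_⟩
        rw [zpow_neg, h, zpow_neg, map_inv₀, mul_inv] }
  have hx0 : x ≠ 0 := by
    rintro rfl
    rw [map_zero] at hu
    exact hu0 (pow_eq_zero_iff hb.ne' |>.1 hu)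
  have hbI : (b : ℤ) ∈ I := ⟨x, 0, hx0, by simp [hu]⟩
  have hcI : ∀ σ, (c σ : ℤ) - 1 ∈ I := by
    intro σ
    obtain ⟨f, hf⟩ := hF (u ^ ((c σ : ℤ) - 1) * ζ ^ (-(z σ : ℤ))) (by
      intro τ
      have h1 := hcomm σ τ
      rw [hz τ, hz σ, map_mul, map_mul, map_pow, map_pow, hc, hc, hz, hz] at h1
      have h2 : (ζ ^ c σ) ^ z τ * ζ ^ z σ = (ζ ^ c τ) ^ z σ * ζ ^ z τ := by
        apply mul_right_cancel₀ hu0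
        rw [mul_assoc, h1]; ring
      rw [map_mul, map_zpow₀, map_zpow₀, hz, hc]
      have e1 : ζ ^ ((c σ : ℤ) * z τ + z σ) = ζ ^ ((c τ : ℤ) * z σ + z τ) := by
        rw [zpow_add₀ hζ0, zpow_add₀ hζ0]
        have := h2
        rw [← pow_mul, ← pow_mul] at this
        exact_mod_cast this
      rw [mul_zpow, ← zpow_natCast, ← zpow_natCast, ← zpow_mul, ← zpow_mul]
      have e2 : ζ ^ ((z τ : ℤ) * ((c σ : ℤ) - 1)) * ζ ^ ((c τ : ℤ) * -(z σ : ℤ)) = ζ ^ (-(z σ : ℤ)) := by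
        rw [← zpow_add₀ hζ0]
        have : (z τ : ℤ) * ((c σ : ℤ) - 1) + (c τ : ℤ) * -(z σ : ℤ)
          = ((c σ : ℤ) * z τ + z σ) + (- ((c τ : ℤ) * z σ + z τ) - z σ) := by ring
        rw [this, zpow_add₀ hζ0, e1, ← zpow_add₀ hζ0]
        congr 1; ring
      rw [← e2]; ring)
    refine ⟨f, z σ, ?_, ?_⟩
    · rintro rfl
      rw [map_zero] at hf
      exact mul_ne_zero (zpow_ne_zero _ hu0) (zpow_ne_zero _ hζ0) hf.symm
    · rw [hf, mul_assoc, ← zpow_add₀ hζ0]; simp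
  obtain ⟨e, he⟩ := Int.subgroup_cyclic I
  have hmem : ∀ a, a ∈ I ↔ e ∣ a := by
    intro a
    rw [he, ← AddSubgroup.zmultiples_eq_closure, Int.mem_zmultiples_iff]
  have heb := (hmem _).1 hbI
  have he0 : e ≠ 0 := by
    rintro rfl
    rw [zero_dvd_iff] at heb
    omega
  have hen : 0 < e.natAbs := Int.natAbs_pos.2 he0
  have heb' : e.natAbs ∣ b := Int.natAbs_dvd_natAbs.2 heb
  refine ⟨e.natAbs, hen, ?_, ?_⟩
  · obtain ⟨q, hq⟩ := heb'
    have hprim : IsPrimitiveRoot (ζ ^ q) e.natAbs := hζ.pow hb (by rw [hq, mul_comm])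
    obtain ⟨η, hη⟩ := hF (ζ ^ q) (by
      intro σ
      rw [map_pow, hc, ← pow_mul, mul_comm, pow_mul]
      have h1 : (e.natAbs : ℤ) ∣ (c σ : ℤ) - 1 := Int.natAbs_dvd.2 ((hmem _).1 (hcI σ))
      have h2 : (ζ ^ q) ^ ((c σ : ℤ) - 1) = 1 := (hprim.zpow_eq_one_iff_dvd _).2 h1
      have h3 : (ζ ^ q) ^ (((c σ : ℤ) - 1) + 1) = ζ ^ q := by
        rw [zpow_add₀ (pow_ne_zero _ hζ0), h2]; simp
      rw [sub_add_cancel, zpow_natCast] at h3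
      exact h3)
    refine ⟨η, ?_⟩
    rw [← hη] at hprim
    exact hprim.of_map_of_injective (algebraMap F Ω).injective
  · obtain ⟨f, k, hf, h⟩ := (hmem (e.natAbs : ℤ)).2 (Int.dvd_natAbs.2 dvd_rfl)
    refine ⟨f, (algebraMap F Ω).injective ?_⟩
    rw [map_pow, map_pow, ← hu]
    rw [zpow_natCast] at h
    rw [← pow_mul, mul_comm, pow_mul, h, mul_pow]
    have : (ζ ^ k) ^ b = 1 := by
      rw [← zpow_natCast, ← zpow_mul, mul_comm, zpow_mul, zpow_natCast, hζ.pow_eq_one, one_zpow]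
    rw [this, mul_one]

open NumberField in
theorem power_torsion (K : Type*) [Field K] [NumberField K] (x : K) (hx : x ≠ 0) (S : Set ℕ)
    (hS : S.Infinite) (h : ∀ b ∈ S, ∃ e : ℕ, 0 < e ∧ (∃ η : K, IsPrimitiveRoot η e) ∧ ∃ f : K, f ^ b = x ^ e) :
    ∃ m : ℕ, 0 < m ∧ x ^ m = 1 := by
  classical
  choose! e he0 hη f hf using h
  have hfin := Embeddings.finite_of_norm_le K ℂ 1
  obtain ⟨S1, hS1, hS1i, e1, he1⟩ := exists_infinite_const hS e (by
    refine (hfin.image orderOf).subset ?_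
    rintro _ ⟨b, hb, rfl⟩
    obtain ⟨η, hη⟩ := hη b hb
    refine ⟨η, ⟨hη.isIntegral (he0 b hb), fun φ => ?_⟩, hη.eq_orderOf.symm⟩
    have : φ η ^ e b = 1 := by rw [← map_pow, hη.pow_eq_one, map_one]
    exact (norm_eq_one_of_pow_eq_one this (he0 b hb).ne').le)
  obtain ⟨b0, hb0⟩ := hS1i.nonempty
  have he1p : 0 < e1 := by rw [← he1 b0 hb0]; exact he0 b0 (hS1 hb0)
  set X := x ^ e1 with hX
  have hX0 : X ≠ 0 := pow_ne_zero _ hx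
  have hfX : ∀ b ∈ S1, f b ^ b = X := fun b hb => by rw [hf b (hS1 hb), he1 b hb]
  have : IsAlgebraic ℤ X := (IsFractionRing.isAlgebraic_iff ℤ ℚ K).2 (Algebra.IsAlgebraic.isAlgebraic X)
  obtain ⟨d, hd, hdX⟩ := this.exists_integral_multiple
  have hcast : ∀ n : ℤ, IsIntegral ℤ (n : K) := fun n => by
    simpa using (isIntegral_algebraMap (R := ℤ) (A := K) (x := n))
  have hdK : (d : K) ≠ 0 := by exact_mod_cast hd
  obtain ⟨B, hB⟩ : ∃ B : ℝ, ∀ φ : K →+* ℂ, ‖φ X‖ ≤ B := by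
    obtain ⟨c, hc⟩ := (Set.finite_range (fun φ : K →+* ℂ => ‖φ X‖)).bddAbove
    exact ⟨c, fun i => hc ⟨i, rfl⟩⟩
  have hfin2 := Embeddings.finite_of_norm_le K ℂ (‖(d : ℂ)‖ * max 1 B)
  have hS1p : (S1 \ {0}).Infinite := hS1i.diff (Set.finite_singleton 0)
  obtain ⟨S2, hS2, hS2i, y, hy⟩ := exists_infinite_const hS1p (fun b => (d : K) * f b) (by
    refine hfin2.subset ?_
    rintro _ ⟨b, ⟨hb, hb0⟩, rfl⟩
    have hbp : 0 < b := Nat.pos_of_ne_zero hb0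
    refine ⟨?_, fun φ => ?_⟩
    · apply IsIntegral.of_pow hbp
      rw [mul_pow, hfX b hb]
      have : (d : K) ^ b * X = (d : K) ^ (b - 1) * ((d : K) * X) := by
        rw [← mul_assoc, ← pow_succ, Nat.sub_add_cancel hbp]
      rw [this]
      refine ((hcast d).pow _).mul ?_
      simpa [zsmul_eq_mul] using hdX
    · rw [map_mul, map_intCast, norm_mul]
      refine mul_le_mul_of_nonneg_left ?_ (norm_nonneg _)
      have h1 : ‖φ (f b)‖ ^ b ≤ B := by
        rw [← norm_pow, ← map_pow, hfX b hb]; exact hB φ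
      by_contra hcon
      push Not at hcon
      have h2 : 1 ≤ ‖φ (f b)‖ := (le_max_left _ _).trans hcon.le
      have h3 := le_self_pow₀ h2 hbp.ne'
      have := (le_max_right 1 B).trans_lt hcon
      linarith)
  obtain ⟨b1, hb1⟩ := hS2i.nonempty
  obtain ⟨b2, hb2, hlt⟩ := hS2i.exists_gt b1
  have h1 := hfX b1 (hS2 hb1).1
  have h2 := hfX b2 (hS2 hb2).1
  have hff : f b1 = f b2 := mul_left_cancel₀ hdK ((hy b1 hb1).trans (hy b2 hb2).symm)
  have hb1p : b1 ≠ 0 := (hS2 hb1).2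
  have hf0 : f b1 ≠ 0 := by
    intro h0
    rw [h0, zero_pow hb1p] at h1
    exact hX0 h1.symm
  rw [← hff] at h2
  have h3 : f b1 ^ (b2 - b1) = 1 := by
    apply mul_left_cancel₀ (pow_ne_zero b1 hf0)
    rw [← pow_add, Nat.add_sub_cancel' hlt.le, h2, h1, mul_one]
  refine ⟨e1 * (b2 - b1), Nat.mul_pos he1p (Nat.sub_pos_of_lt hlt), ?_⟩
  rw [pow_mul, ← hX, ← h1, ← pow_mul, mul_comm, pow_mul, h3, one_pow]


theorem kummer_sum {F Ω : Type*} [Field F] [Field Ω] [Algebra F Ω] {b : ℕ} (hb : 0 < b)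
    (ζ : Ω) (hζ : IsPrimitiveRoot ζ b) {ι κ : Type*} [Fintype ι] (c : κ → ι → F) (y : ι → Ω)
    (hy : ∀ i, y i ≠ 0) (x : ι → F) (hyb : ∀ i, y i ^ b = algebraMap F Ω (x i))
    (h0 : ∀ s, ∑ i, algebraMap F Ω (c s i) * y i = 0)
    (hmin : ∀ A : Finset ι, A.Nonempty → (∀ s, ∑ i ∈ A, algebraMap F Ω (c s i) * y i = 0) →
      A = Finset.univ) (i0 : ι) (hi0 : y i0 = 1) :
    ∀ i, ∀ σ : Ω ≃ₐ[F] Ω, σ ζ = ζ → σ (y i) = y i := by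
  classical
  haveI : NeZero b := ⟨hb.ne'⟩
  let H := MulAction.stabilizer (Ω ≃ₐ[F] Ω) ζ
  have hH : ∀ σ : Ω ≃ₐ[F] Ω, σ ∈ H ↔ σ ζ = ζ := fun σ => by
    simp [H, MulAction.mem_stabilizer_iff]
  let χ : ι → (H →* Ω) := fun i =>
    { toFun := fun σ => (σ : Ω ≃ₐ[F] Ω) (y i) / y i
      map_one' := by simp [hy i]
      map_mul' := by
        rintro ⟨σ, hσ⟩ ⟨τ, hτ⟩
        rw [hH] at hσ hτ
        obtain ⟨k, _, hk⟩ := hζ.eq_pow_of_pow_eq_one (ξ := τ (y i) / y i) (by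
          rw [div_pow, ← map_pow, hyb, AlgEquiv.commutes, ← hyb, div_self (pow_ne_zero _ (hy i))])
        have h1 : τ (y i) = ζ ^ k * y i := by rw [hk, div_mul_cancel₀ _ (hy i)]
        have h2 : σ (τ (y i)) = ζ ^ k * σ (y i) := by rw [h1, map_mul, map_pow, hσ]
        show σ (τ (y i)) / y i = σ (y i) / y i * (τ (y i) / y i)
        rw [h2, h1]
        have := hy i
        field_simp }
  have hχ : ∀ i (σ : H), (σ : Ω ≃ₐ[F] Ω) (y i) = y i * χ i σ := fun i σ => by
    show _ = y i * ((σ : Ω ≃ₐ[F] Ω) (y i) / y i)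
    rw [mul_div_cancel₀ _ (hy i)]
  have key : ∀ φ ∈ Finset.univ.image χ, ∀ s, ∑ i with χ i = φ, algebraMap F Ω (c s i) * y i = 0 := by
    intro φ hφ s
    have hli := linearIndependent_monoidHom H Ω
    rw [linearIndependent_iff'] at hli
    refine hli (Finset.univ.image χ) (fun φ => ∑ i with χ i = φ, algebraMap F Ω (c s i) * y i) ?_ φ hφ
    funext σ
    rw [Finset.sum_apply]
    have h1 := congrArg (σ : Ω ≃ₐ[F] Ω) (h0 s)
    rw [map_sum, map_zero] at h1
    rw [Pi.zero_apply, ← h1]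
    rw [← Finset.sum_fiberwise_of_maps_to (s := Finset.univ) (t := Finset.univ.image χ) (g := χ)
      (fun i hi => Finset.mem_image_of_mem _ hi)]
    refine Finset.sum_congr rfl fun φ _ => ?_
    rw [Pi.smul_apply, smul_eq_mul, Finset.sum_mul]
    refine Finset.sum_congr rfl fun i hi => ?_
    rw [Finset.mem_filter] at hi
    rw [map_mul, AlgEquiv.commutes, hχ, hi.2, mul_assoc]
  have hA := hmin (Finset.univ.filter fun i => χ i = χ i0) ⟨i0, by simp⟩
    (key _ (Finset.mem_image_of_mem _ (Finset.mem_univ _)))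
  intro i σ hσ
  have hi : i ∈ Finset.univ.filter fun i => χ i = χ i0 := by rw [hA]; simp
  rw [Finset.mem_filter] at hi
  have h1 := hχ i ⟨σ, (hH σ).2 hσ⟩
  have h2 := hχ i0 ⟨σ, (hH σ).2 hσ⟩
  rw [hi.2] at h1
  simp only [hi0, map_one, one_mul] at h2
  rw [← h2, mul_one] at h1
  exact h1

/-- descend a complex linear relation to finitely many relations over a number field -/
theorem decomp {Ω L : Type*} [Field Ω] [CharZero Ω] [Algebra.IsAlgebraic ℚ Ω] [Field L] [Algebra Ω L]
    {ι : Type*} [Fintype ι] (x : ι → Ω) (lam : ι → L) :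
    ∃ F : IntermediateField ℚ Ω, FiniteDimensional ℚ F ∧ ∃ (n : ℕ) (c : Fin n → ι → F)
      (xF : ι → F), (∀ i, (xF i : Ω) = x i) ∧ ∀ (A : Finset ι) (y : ι → Ω),
        (∑ i ∈ A, lam i * algebraMap Ω L (y i) = 0 ↔
          ∀ s, ∑ i ∈ A, algebraMap F Ω (c s i) * y i = 0) := by
  classical
  let V := Submodule.span Ω (Set.range lam)
  haveI : FiniteDimensional Ω V := FiniteDimensional.span_of_finite Ω (Set.finite_range lam)
  let n := Module.finrank Ω V
  let bs : Module.Basis (Fin n) Ω V := Module.finBasis Ω V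
  let v : ι → V := fun i => ⟨lam i, Submodule.subset_span ⟨i, rfl⟩⟩
  let d : Fin n → ι → Ω := fun s i => bs.repr (v i) s
  let G : Set Ω := Set.range x ∪ Set.range (fun p : Fin n × ι => d p.1 p.2)
  have hG : G.Finite := (Set.finite_range _).union (Set.finite_range _)
  let F := IntermediateField.adjoin ℚ G
  have hsub : G ⊆ F := IntermediateField.subset_adjoin ℚ G
  refine ⟨F, ?_, n, fun s i => ⟨d s i, hsub (Or.inr ⟨(s, i), rfl⟩)⟩,
    fun i => ⟨x i, hsub (Or.inl ⟨i, rfl⟩)⟩, fun i => rfl, ?_⟩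
  · haveI : Finite G := hG
    exact IntermediateField.finiteDimensional_adjoin
      (fun x _ => (Algebra.IsAlgebraic.isAlgebraic x).isIntegral)
  · intro A y
    have h1 : ∑ i ∈ A, lam i * algebraMap Ω L (y i) = ((∑ i ∈ A, y i • v i : V) : L) := by
      rw [Submodule.coe_sum]
      refine Finset.sum_congr rfl fun i _ => ?_
      rw [Submodule.coe_smul, Algebra.smul_def, mul_comm]
    rw [h1, Submodule.coe_eq_zero, ← bs.repr.map_eq_zero_iff, Finsupp.ext_iff]
    refine forall_congr' fun s => ?_
    have h2 : (bs.repr (∑ i ∈ A, y i • v i)) s = ∑ i ∈ A, d s i * y i := by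
      rw [map_sum, Finsupp.finset_sum_apply]
      refine Finset.sum_congr rfl fun i _ => ?_
      rw [map_smul, Finsupp.smul_apply, smul_eq_mul, mul_comm]
    rw [h2]
    rfl


theorem qbar_alg : IsAlgClosure ℚ (algebraicClosure ℚ ℂ) := algebraicClosure.isAlgClosure ℚ ℂ

theorem exp_rat_alg (nu : ℂ) (q : ℚ) (h : IsAlgebraic ℚ (Complex.exp nu)) :
    IsAlgebraic ℚ (Complex.exp (nu * q)) := by
  have h1 : Complex.exp (nu * q) ^ q.den = Complex.exp nu ^ q.num := by
    rw [← Complex.exp_nat_mul, ← Complex.exp_int_mul]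
    congr 1
    have : (q : ℂ) * q.den = q.num := by exact_mod_cast Rat.mul_den_eq_num q
    linear_combination nu * this
  refine IsAlgebraic.of_pow q.den_pos (h1 ▸ ?_)
  rw [← mem_algebraicClosure_iff] at h ⊢
  exact zpow_mem h _

theorem lemE_unb {ι : Type*} [Fintype ι] (lam nu : ι → ℂ) (i0 : ι) (hi0 : nu i0 = 0)
    (hal : ∀ i, IsAlgebraic ℚ (Complex.exp (nu i))) (T : Set ℚ) (hT : (Rat.den '' T).Infinite)
    (hmin : ∀ q ∈ T, MinZero Finset.univ (fun i => lam i * Complex.exp (nu i * q))) (i : ι) :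
    ∃ m : ℕ, 0 < m ∧ Complex.exp (nu i) ^ m = 1 := by
  classical
  haveI := qbar_alg
  let Ω := algebraicClosure ℚ ℂ
  haveI : IsAlgClosed Ω := qbar_alg.isAlgClosed
  let x : ι → Ω := fun i => ⟨Complex.exp (nu i), mem_algebraicClosure_iff.2 (hal i)⟩
  let y : ℚ → ι → Ω := fun q i =>
    ⟨Complex.exp (nu i * q), mem_algebraicClosure_iff.2 (exp_rat_alg _ q (hal i))⟩
  have hy0 : ∀ q i, y q i ≠ 0 := fun q i h => Complex.exp_ne_zero (nu i * q) (congrArg Subtype.val h)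
  have hx0 : ∀ i, x i ≠ 0 := fun i h => Complex.exp_ne_zero (nu i) (congrArg Subtype.val h)
  have hyx : ∀ (q : ℚ) i, y q i ^ q.den = x i ^ q.num := by
    intro q i
    apply Subtype.ext
    show Complex.exp (nu i * q) ^ q.den = ((x i ^ q.num : Ω) : ℂ)
    have h2 : ((x i ^ q.num : Ω) : ℂ) = Complex.exp (nu i) ^ q.num := map_zpow₀ Ω.val (x i) q.num
    rw [h2, ← Complex.exp_nat_mul, ← Complex.exp_int_mul]
    congr 1
    have : (q : ℂ) * q.den = q.num := by exact_mod_cast Rat.mul_den_eq_num q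
    linear_combination nu i * this
  obtain ⟨F, hF, n, c, xF, hxF, hrel⟩ := decomp x lam
  haveI : NumberField F := ⟨⟩
  haveI : Algebra.IsAlgebraic F Ω := Algebra.IsAlgebraic.tower_top (K := ℚ) F
  haveI : IsAlgClosure F Ω := ⟨inferInstance, inferInstance⟩
  haveI : IsGalois F Ω := IsAlgClosure.isGalois F Ω
  have hxF0 : xF i ≠ 0 := fun h => hx0 i (by rw [← hxF, h]; rfl)
  obtain ⟨m, hm, hm1⟩ := power_torsion F (xF i) hxF0 (Rat.den '' T) hT (by
    rintro _ ⟨q, hq, rfl⟩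
    haveI : NeZero q.den := ⟨q.den_ne_zero⟩
    obtain ⟨ζ, hζ⟩ := HasEnoughRootsOfUnity.exists_primitiveRoot Ω q.den
    obtain ⟨_, h0, h1⟩ := hmin q hq
    have hr : ∀ A : Finset ι, ∑ i ∈ A, lam i * Complex.exp (nu i * q) = 0 ↔
        ∀ s, ∑ i ∈ A, algebraMap F Ω (c s i) * y q i = 0 := fun A => hrel A (y q)
    have hfix := kummer_sum q.den_pos ζ hζ c (y q) (hy0 q) (fun i => xF i ^ q.num)
      (fun i => by rw [hyx, map_zpow₀]; congr 1; exact (hxF i).symm) ((hr _).1 h0) (fun A hA hs => by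
        by_contra hne
        exact h1 A (Finset.subset_univ _) hA hne ((hr A).2 hs)) i0
        (Subtype.ext (by show Complex.exp (nu i0 * q) = 1; rw [hi0, zero_mul, Complex.exp_zero])) i
    have hcop : IsCoprime q.num (q.den : ℤ) := by
      rw [Int.isCoprime_iff_gcd_eq_one]; exact q.reduced
    obtain ⟨α, β, hab⟩ := hcop
    refine kummer q.den_pos ζ hζ (xF i) (y q i ^ α * x i ^ β)
      (mul_ne_zero (zpow_ne_zero _ (hy0 q i)) (zpow_ne_zero _ (hx0 i))) ?_ ?_
    · have : algebraMap F Ω (xF i) = x i := hxF i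
      rw [this, mul_pow, ← zpow_natCast, ← zpow_natCast, ← zpow_mul, ← zpow_mul, mul_comm α, zpow_mul,
        zpow_natCast, hyx, ← zpow_mul, ← zpow_add₀ (hx0 i), mul_comm q.num, hab, zpow_one]
    · intro σ hσ
      have : algebraMap F Ω (xF i) = x i := hxF i
      rw [map_mul, map_zpow₀, map_zpow₀, hfix σ hσ, ← this, AlgEquiv.commutes])
  refine ⟨m, hm, ?_⟩
  have h2 : x i ^ m = 1 := by
    rw [← hxF i]
    exact_mod_cast congrArg (algebraMap F Ω) hm1
  exact congrArg Subtype.val h2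

theorem lemE_bdd {ι : Type*} [Fintype ι] (lam nu : ι → ℂ) (i0 : ι) (hi0 : nu i0 = 0)
    (hal : ∀ i, IsAlgebraic ℚ (Complex.exp (nu i))) (T : Set ℕ) (hT : T.Infinite)
    (hmin : ∀ q ∈ T, MinZero Finset.univ (fun i => lam i * Complex.exp (nu i) ^ q)) (i : ι) :
    ∃ m : ℕ, 0 < m ∧ Complex.exp (nu i) ^ m = 1 := by
  classical
  haveI := qbar_alg
  let Ω := algebraicClosure ℚ ℂ
  let x : ι → Ω := fun i => ⟨Complex.exp (nu i), mem_algebraicClosure_iff.2 (hal i)⟩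
  have hx0 : ∀ i, x i ≠ 0 := fun i h => Complex.exp_ne_zero (nu i) (congrArg Subtype.val h)
  obtain ⟨F, hF, n, c, xF, hxF, hrel⟩ := decomp x lam
  haveI : NumberField F := ⟨⟩
  have hxF' : ∀ i, algebraMap F Ω (xF i) = x i := hxF
  have hr : ∀ (q : ℕ) (A : Finset ι), ∑ i ∈ A, lam i * Complex.exp (nu i) ^ q = 0 ↔
        ∀ s, ∑ i ∈ A, c s i * xF i ^ q = 0 := by
    intro q A
    refine (hrel A (fun i => x i ^ q)).trans (forall_congr' fun s => ?_)
    rw [← map_eq_zero_iff _ (algebraMap F Ω).injective, map_sum]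
    simp_rw [map_mul, map_pow, hxF']
  have hxF0 : ∀ i, xF i ≠ 0 := fun i h => hx0 i (by rw [← hxF, h]; rfl)
  obtain ⟨M, hM, hM'⟩ := sml F xF hxF0
  obtain ⟨q, hq, hq'⟩ := hM' T hT
  have hA : (Finset.univ.filter fun i => xF i ^ M = 1) = Finset.univ := by
    by_contra hne
    refine (hmin q hq).2.2 _ (Finset.subset_univ _) ⟨i0, ?_⟩ hne ((hr q _).2 fun s => ?_)
    · rw [Finset.mem_filter]
      refine ⟨Finset.mem_univ _, (algebraMap F Ω).injective ?_⟩
      rw [map_pow, hxF', map_one]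
      have : x i0 = 1 := Subtype.ext (by show Complex.exp (nu i0) = 1; rw [hi0, Complex.exp_zero])
      rw [this, one_pow]
    · exact hq' (c s) (fun n hn => (hr n _).1 (hmin n hn).2.1 s) 1
  have hi : i ∈ (Finset.univ.filter fun i => xF i ^ M = 1) := by rw [hA]; simp
  rw [Finset.mem_filter] at hi
  refine ⟨M, hM, ?_⟩
  have h2 : x i ^ M = 1 := by
    rw [← hxF' i, ← map_pow, hi.2, map_one]
  exact congrArg Subtype.val h2

theorem lemE {ι : Type*} [Fintype ι] (lam nu : ι → ℂ) (i0 : ι) (hi0 : nu i0 = 0)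
    (hal : ∀ i, IsAlgebraic ℚ (Complex.exp (nu i))) (T : Set ℚ) (hT : T.Infinite)
    (hmin : ∀ q ∈ T, MinZero Finset.univ (fun i => lam i * Complex.exp (nu i * q))) (i : ι) :
    ∃ m : ℕ, 0 < m ∧ Complex.exp (nu i) ^ m = 1 := by
  classical
  by_cases hden : (Rat.den '' T).Infinite
  · exact lemE_unb lam nu i0 hi0 hal T hden hmin i
  rw [Set.not_infinite] at hden
  let D : ℕ := ∏ d ∈ hden.toFinset, d
  have hD : D ≠ 0 := Finset.prod_ne_zero_iff.2 fun d hd => by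
    rw [Set.Finite.mem_toFinset] at hd
    obtain ⟨q, _, rfl⟩ := hd
    exact q.den_ne_zero
  have hDC : (D : ℂ) ≠ 0 := by exact_mod_cast hD
  have hint : ∀ q ∈ T, ∃ k : ℤ, q * D = k := by
    intro q hq
    obtain ⟨e, he⟩ : q.den ∣ D := Finset.dvd_prod_of_mem (fun d => d)
      ((Set.Finite.mem_toFinset hden).2 ⟨q, hq, rfl⟩)
    refine ⟨q.num * e, ?_⟩
    rw [he]
    push_cast
    rw [← mul_assoc, Rat.mul_den_eq_num]
  -- a common finishing step, for either sign
  have fin : ∀ ε : ℤ, ε * ε = 1 → {n : ℕ | ∃ q ∈ T, q * D = ε * n}.Infinite →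
      ∃ m : ℕ, 0 < m ∧ Complex.exp (nu i) ^ m = 1 := by
    intro ε hε hinf
    have hεC : (ε : ℂ) * ε = 1 := by exact_mod_cast hε
    obtain ⟨m, hm, hm1⟩ := lemE_bdd lam (fun i => nu i * ((ε / D : ℚ) : ℚ)) i0 (by simp [hi0])
      (fun i => exp_rat_alg _ _ (hal i)) _ hinf (by
        rintro n ⟨q, hq, hqn⟩
        have h1 := hmin q hq
        have h2 : ∀ i, Complex.exp (nu i * ((ε / D : ℚ) : ℚ)) ^ n = Complex.exp (nu i * q) := by
          intro i
          rw [← Complex.exp_nat_mul]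
          congr 1
          have : (q : ℂ) * D = ε * n := by exact_mod_cast hqn
          push_cast
          field_simp
          linear_combination (-nu i) * this
        simp_rw [h2]
        exact h1) i
    refine ⟨m, hm, ?_⟩
    have h3 : Complex.exp (nu i) = Complex.exp (nu i * ((ε / D : ℚ) : ℚ)) ^ (ε * D) := by
      rw [← Complex.exp_int_mul]
      congr 1
      push_cast
      field_simp
      linear_combination (-nu i) * hεC
    have h4 : (Complex.exp (nu i * ((ε / D : ℚ) : ℚ)) ^ (ε * D)) ^ m = 1 := by
      rw [← zpow_natCast, zpow_comm, zpow_natCast, hm1, one_zpow]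
    rw [h3, h4]
  by_cases hp : {n : ℕ | ∃ q ∈ T, q * D = (1 : ℤ) * n}.Infinite
  · exact fin 1 (by norm_num) hp
  by_cases hn : {n : ℕ | ∃ q ∈ T, q * D = (-1 : ℤ) * n}.Infinite
  · exact fin (-1) (by norm_num) hn
  exfalso
  rw [Set.not_infinite] at hp hn
  apply hT
  refine ((hp.image fun n : ℕ => (n : ℚ) / D).union (hn.image fun n : ℕ => -(n : ℚ) / D)).subset ?_
  intro q hq
  have hDQ : (D : ℚ) ≠ 0 := by exact_mod_cast hD
  obtain ⟨k, hk⟩ := hint q hq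
  obtain ⟨n, rfl | rfl⟩ := k.eq_nat_or_neg
  · left
    exact ⟨n, ⟨q, hq, by rw [hk]; push_cast; ring⟩, by
      show (n : ℚ) / D = q
      rw [div_eq_iff hDQ, hk]; push_cast; ring⟩
  · right
    exact ⟨n, ⟨q, hq, by rw [hk]; push_cast; ring⟩, by
      show -(n : ℚ) / D = q
      rw [div_eq_iff hDQ, hk]; push_cast; ring⟩


theorem partition_exists {ι : Type*} [DecidableEq ι] (w : ι → ℂ) (n : ℕ) : ∀ B : Finset ι,
    B.card = n → ∑ i ∈ B, w i = 0 → ∃ p : ι → Finset ι, ∀ i ∈ B, i ∈ p i ∧ p i ⊆ B ∧ MinZero (p i) w ∧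
      ∀ j ∈ p i, p j = p i := by
  induction n using Nat.strong_induction_on with
  | _ n ih =>
    intro B hB h0
    rcases B.eq_empty_or_nonempty with rfl | hne
    · exact ⟨fun _ => ∅, by simp⟩
    let X := B.powerset.filter fun A => A.Nonempty ∧ ∑ i ∈ A, w i = 0
    have hX : X.Nonempty := ⟨B, by simp [X, hne, h0]⟩
    obtain ⟨A, hA, hAm⟩ := X.exists_min_image Finset.card hX
    simp only [X, Finset.mem_filter, Finset.mem_powerset] at hA hAm
    obtain ⟨hAB, hAne, hA0⟩ := hA
    have hmin : MinZero A w := by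
      refine ⟨hAne, hA0, fun A' hA' hne' hneq h => hneq ?_⟩
      exact Finset.eq_of_subset_of_card_le hA' (hAm A' ⟨hA'.trans hAB, hne', h⟩)
    have hcard : (B \ A).card < n := by
      rw [Finset.card_sdiff_of_subset hAB, hB]
      have := Finset.card_pos.2 hAne
      have := Finset.card_le_card hAB
      omega
    obtain ⟨p, hp⟩ := ih _ hcard (B \ A) rfl (by
      have := Finset.sum_sdiff (f := w) hAB
      rw [hA0, add_zero, h0] at this
      exact this)
    refine ⟨fun i => if i ∈ A then A else p i, fun i hi => ?_⟩
    by_cases hiA : i ∈ A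
    · simp only [hiA, if_true]
      exact ⟨trivial, hAB, hmin, fun j hj => by simp [hj]⟩
    · simp only [hiA, if_false]
      obtain ⟨h1, h2, h3, h4⟩ := hp i (Finset.mem_sdiff.2 ⟨hi, hiA⟩)
      refine ⟨h1, h2.trans Finset.sdiff_subset, h3, fun j hj => ?_⟩
      have := (Finset.mem_sdiff.1 (h2 hj)).2
      simp only [this, if_false]
      exact h4 j hj

theorem MinZero.scale {ι : Type*} {B : Finset ι} {w w' : ι → ℂ} (h : MinZero B w) (c : ℂ) (hc : c ≠ 0)
    (hw : ∀ i ∈ B, w' i = c * w i) : MinZero B w' := by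
  have hs : ∀ A ⊆ B, ∑ i ∈ A, w' i = c * ∑ i ∈ A, w i := fun A hA => by
    rw [Finset.mul_sum]; exact Finset.sum_congr rfl fun i hi => hw i (hA hi)
  refine ⟨h.1, by rw [hs B subset_rfl, h.2.1, mul_zero], fun A hA hne hneq => ?_⟩
  rw [hs A hA]
  exact mul_ne_zero hc (h.2.2 A hA hne hneq)

theorem MinZero.attach {ι : Type*} {B : Finset ι} {w : ι → ℂ} (h : MinZero B w) :
    MinZero (Finset.univ : Finset B) (fun i => w i) := by
  classical
  obtain ⟨h1, h2, h3⟩ := h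
  refine ⟨⟨⟨h1.choose, h1.choose_spec⟩, Finset.mem_univ _⟩, ?_, fun A _ hne hneq => ?_⟩
  · rw [← h2]; exact Finset.sum_coe_sort B w
  · have := h3 (A.map ⟨Subtype.val, Subtype.val_injective⟩) (by
      intro x hx
      rw [Finset.mem_map] at hx
      obtain ⟨y, _, rfl⟩ := hx
      exact y.2) (hne.map) (by
      intro heq
      apply hneq
      ext y
      simp only [Finset.mem_univ, iff_true]
      have hy : (y : ι) ∈ A.map ⟨Subtype.val, Subtype.val_injective⟩ := by
        rw [heq]; exact y.2
      rw [Finset.mem_map] at hy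
      obtain ⟨y', hy', h⟩ := hy
      rwa [← Subtype.ext h])
    rw [Finset.sum_map] at this
    exact this

theorem block_torsion {ι : Type*} (B : Finset ι) (lam mu : ι → ℂ) (z0 d : ℂ) (T : Set ℚ)
    (hT : T.Infinite) (hal : ∀ i ∈ B, ∀ j ∈ B, IsAlgebraic ℚ (Complex.exp ((mu i - mu j) * d)))
    (hmin : ∀ q ∈ T, MinZero B (fun i => lam i * Complex.exp (mu i * (z0 + q * d))))
    (i i' : ι) (hi : i ∈ B) (hi' : i' ∈ B) :
    ∃ m : ℕ, 0 < m ∧ ∃ n : ℤ, (mu i' - mu i) * d * m = n * (2 * Real.pi * I) := by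
  obtain ⟨m, hm, h⟩ := lemE (ι := B) (fun k => lam k * Complex.exp (mu k * z0))
    (fun k => (mu k - mu i) * d) ⟨i, hi⟩ (by simp) (fun k => hal k k.2 i hi) T hT (fun q hq => by
      refine MinZero.attach (w := fun k => lam k * Complex.exp (mu k * z0) *
        Complex.exp ((mu k - mu i) * d * q)) ?_
      refine (hmin q hq).scale (Complex.exp (- mu i * (q * d))) (Complex.exp_ne_zero _) fun k _ => ?_
      rw [mul_left_comm, ← Complex.exp_add, mul_assoc, ← Complex.exp_add]
      congr 2
      ring) ⟨i', hi'⟩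
  refine ⟨m, hm, ?_⟩
  rw [← Complex.exp_nat_mul, Complex.exp_eq_one_iff] at h
  obtain ⟨n, hn⟩ := h
  exact ⟨n, by rw [← hn]; ring⟩

theorem claimM (hSC : SchanuelConjecture) {ι : Type*} [DecidableEq ι] (lam mu : ι → ℂ) (S : Set ℂ)
    (hS : S.Infinite) (W : Submodule ℚ ℂ) [FiniteDimensional ℚ W] (A B : Finset ι)
    (hA : ∀ z ∈ S, MinZero A (fun i => lam i * Complex.exp (mu i * z)))
    (hB : ∀ z ∈ S, MinZero B (fun i => lam i * Complex.exp (mu i * z)))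
    (hWA : ∀ i ∈ A, ∀ j ∈ A, ∀ z ∈ S, (mu i - mu j) * z ∈ W)
    (hWB : ∀ i ∈ B, ∀ j ∈ B, ∀ z ∈ S, (mu i - mu j) * z ∈ W)
    (i i' : ι) (hi : i ∈ A) (hi' : i' ∈ A) (j j' : ι) (hj : j ∈ B) (hj' : j' ∈ B)
    (ha : mu i' - mu i ≠ 0) : ∃ c : ℚ, mu j' - mu j = c * (mu i' - mu i) := by
  by_contra hab
  push Not at hab
  obtain ⟨S1, hS1, hS1i, h1⟩ := step2 W A lam mu S hS hWA hA
  obtain ⟨S2, hS2, hS2i, h2⟩ := step2 W B lam mu S1 hS1i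
    (fun i hi j hj z hz => hWB i hi j hj z (hS1 hz)) (fun z hz => hB z (hS1 hz))
  obtain ⟨z0, hz0⟩ := hS2i.nonempty
  obtain ⟨z1, hz1, hne⟩ := hS2i.nontrivial.exists_ne z0
  have hd : z1 - z0 ≠ 0 := sub_ne_zero.2 hne
  have hq : ∀ z ∈ S2, ∃ q : ℚ, z - z0 = q * (z1 - z0) := by
    intro z hz
    by_contra hcon
    push Not at hcon
    exact four_exp hSC (mu i' - mu i) (mu j' - mu j) (z1 - z0) (z - z0) ha hd hab hcon
      (h1 _ (hS2 hz1) _ (hS2 hz0) _ hi' _ hi) (h1 _ (hS2 hz) _ (hS2 hz0) _ hi' _ hi)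
      (h2 _ hz1 _ hz0 _ hj' _ hj) (h2 _ hz _ hz0 _ hj' _ hj)
  let T : Set ℚ := {q | z0 + q * (z1 - z0) ∈ S2}
  have hT : T.Infinite := by
    intro hfin
    apply hS2i
    refine (hfin.image fun q : ℚ => z0 + q * (z1 - z0)).subset fun z hz => ?_
    obtain ⟨q, hq⟩ := hq z hz
    have : z0 + q * (z1 - z0) = z := by rw [← hq]; ring
    exact ⟨q, by show z0 + q * (z1 - z0) ∈ S2; rwa [this], this⟩
  obtain ⟨m, hm, n, hmn⟩ := block_torsion A lam mu z0 (z1 - z0) T hT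
    (fun i hi j hj => h1 _ (hS2 hz1) _ (hS2 hz0) i hi j hj) (fun q hq => hA _ (hS1 (hS2 hq))) i i' hi hi'
  obtain ⟨m', hm', n', hmn'⟩ := block_torsion B lam mu z0 (z1 - z0) T hT
    (fun i hi j hj => h2 _ hz1 _ hz0 i hi j hj) (fun q hq => hB _ (hS1 (hS2 hq))) j j' hj hj'
  have hmC : (m : ℂ) ≠ 0 := by exact_mod_cast hm.ne'
  have hmC' : (m' : ℂ) ≠ 0 := by exact_mod_cast hm'.ne'
  have hn : (n : ℂ) ≠ 0 := by
    intro h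
    rw [h, zero_mul] at hmn
    exact mul_ne_zero (mul_ne_zero ha hd) hmC hmn
  apply hab ((n' * m) / (m' * n))
  push_cast
  rw [div_mul_eq_mul_div, eq_div_iff (mul_ne_zero hmC' hn)]
  apply mul_right_cancel₀ hd
  linear_combination n * hmn' - n' * hmn

theorem common_a (hSC : SchanuelConjecture) {ι : Type*} [Fintype ι] [DecidableEq ι] (lam mu : ι → ℂ)
    (S : Set ℂ) (hS : S.Infinite) (W : Submodule ℚ ℂ) [FiniteDimensional ℚ W] (p : ι → Finset ι)
    (hp : ∀ i, i ∈ p i) (hA : ∀ k, ∀ z ∈ S, MinZero (p k) (fun i => lam i * Complex.exp (mu i * z)))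
    (hW : ∀ k, ∀ i ∈ p k, ∀ j ∈ p k, ∀ z ∈ S, (mu i - mu j) * z ∈ W) :
    ∃ a : ℂ, a ≠ 0 ∧ ∀ i, ∀ i' ∈ p i, ∃ m : ℤ, mu i' - mu i = m * a := by
  by_cases hz : ∀ i, ∀ i' ∈ p i, mu i' - mu i = 0
  · exact ⟨1, one_ne_zero, fun i i' hi' => ⟨0, by rw [hz i i' hi']; simp⟩⟩
  push Not at hz
  obtain ⟨i, i', hi', ha⟩ := hz
  have h : ∀ x : ι × ι, ∃ c : ℚ, x.2 ∈ p x.1 → mu x.2 - mu x.1 = c * (mu i' - mu i) := by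
    rintro ⟨j, j'⟩
    by_cases hj : j' ∈ p j
    · obtain ⟨c, hc⟩ := claimM hSC lam mu S hS W (p i) (p j) (hA i) (hA j) (hW i) (hW j) i i' (hp i) hi'
        j j' (hp j) hj ha
      exact ⟨c, fun _ => hc⟩
    · exact ⟨0, fun h => absurd h hj⟩
  choose c hc using h
  let D : ℕ := ∏ x, (c x).den
  have hD : (D : ℂ) ≠ 0 := by
    have : D ≠ 0 := Finset.prod_ne_zero_iff.2 fun x _ => (c x).den_ne_zero
    exact_mod_cast this
  refine ⟨(mu i' - mu i) / D, div_ne_zero ha hD, fun j j' hj => ?_⟩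
  obtain ⟨e, he⟩ : (c (j, j')).den ∣ D := Finset.dvd_prod_of_mem (fun x => (c x).den) (Finset.mem_univ _)
  refine ⟨(c (j, j')).num * e, ?_⟩
  rw [hc (j, j') hj, mul_div_assoc', eq_div_iff hD]
  have h1 : ((c (j, j') : ℚ) : ℂ) * D = (c (j, j')).num * e := by
    rw [he]
    have := Rat.mul_den_eq_num (c (j, j'))
    push_cast
    rw [← mul_assoc]
    congr 1
    exact_mod_cast this
  push_cast
  rw [← h1]
  ring


theorem IsExpPoly.mk' {ι : Type*} [Fintype ι] (lam mu : ι → ℂ) (f : ℂ → ℂ)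
    (h : ∀ z, f z = ∑ i, lam i * Complex.exp (mu i * z)) : IsExpPoly f := by
  refine ⟨Fintype.card ι, lam ∘ (Fintype.equivFin ι).symm, mu ∘ (Fintype.equivFin ι).symm, fun z => ?_⟩
  rw [h]
  exact (Equiv.sum_comp (Fintype.equivFin ι).symm fun i => lam i * Complex.exp (mu i * z)).symm

theorem IsExpPoly.add' {f g : ℂ → ℂ} (hf : IsExpPoly f) (hg : IsExpPoly g) : IsExpPoly (f + g) := by
  obtain ⟨N, l, m, h⟩ := hf
  obtain ⟨N', l', m', h'⟩ := hg
  refine IsExpPoly.mk' (ι := Fin N ⊕ Fin N') (Sum.elim l l') (Sum.elim m m') _ fun z => ?_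
  simp [h, h']

theorem IsExpPoly.mul' {f g : ℂ → ℂ} (hf : IsExpPoly f) (hg : IsExpPoly g) : IsExpPoly (f * g) := by
  obtain ⟨N, l, m, h⟩ := hf
  obtain ⟨N', l', m', h'⟩ := hg
  refine IsExpPoly.mk' (ι := Fin N × Fin N') (fun x => l x.1 * l' x.2) (fun x => m x.1 + m' x.2) _
    fun z => ?_
  rw [Pi.mul_apply, h, h', Finset.sum_mul_sum, Fintype.sum_prod_type]
  refine Finset.sum_congr rfl fun i _ => Finset.sum_congr rfl fun j _ => ?_
  rw [add_mul, Complex.exp_add]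
  ring

theorem isExpPoly_mono (c m : ℂ) : IsExpPoly (fun z => c * Complex.exp (m * z)) :=
  IsExpPoly.mk' (ι := Unit) (fun _ => c) (fun _ => m) _ fun z => by simp

theorem isExpPoly_const (c : ℂ) : IsExpPoly (fun _ => c) :=
  IsExpPoly.mk' (ι := Unit) (fun _ => c) (fun _ => 0) _ fun z => by simp

theorem isExpPoly_sum {κ : Type*} (s : Finset κ) (F : κ → ℂ → ℂ) (h : ∀ k ∈ s, IsExpPoly (F k)) :
    IsExpPoly (∑ k ∈ s, F k) := by
  classical
  induction s using Finset.induction_on with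
  | empty => exact isExpPoly_const 0
  | insert a s ha ih =>
    rw [Finset.sum_insert ha]
    exact (h a (Finset.mem_insert_self _ _)).add'
      (ih fun k hk => h k (Finset.mem_insert_of_mem hk))

theorem EDvd.sum' {κ : Type*} (s : Finset κ) (h : ℂ → ℂ) (F : κ → ℂ → ℂ) (hF : ∀ k ∈ s, EDvd h (F k)) :
    EDvd h (∑ k ∈ s, F k) := by
  choose! q hq using hF
  refine ⟨∑ k ∈ s, q k, isExpPoly_sum s q fun k hk => (hq k hk).1, ?_⟩
  rw [Finset.mul_sum]
  exact Finset.sum_congr rfl fun k hk => (hq k hk).2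

theorem EDvd.mul_right' {h f g : ℂ → ℂ} (hf : EDvd h f) (hg : IsExpPoly g) : EDvd h (f * g) := by
  obtain ⟨q, hq, rfl⟩ := hf
  exact ⟨q * g, hq.mul' hg, by rw [mul_assoc]⟩

theorem isExpPoly_pow {f : ℂ → ℂ} (hf : IsExpPoly f) (n : ℕ) : IsExpPoly (f ^ n) := by
  induction n with
  | zero => rw [pow_zero]; exact isExpPoly_const 1
  | succ n ih => rw [pow_succ]; exact ih.mul' hf

/-- `e^{az} - e^{az*}` divides `e^{maz} - e^{maz*}` for natural `m` -/
theorem dvd_nat (a w : ℂ) (m : ℕ) : EDvd (fun z => Complex.exp (a * z) - Complex.exp (a * w))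
    (fun z => Complex.exp (m * a * z) - Complex.exp (m * a * w)) := by
  refine ⟨∑ i ∈ Finset.range m, (fun z => 1 * Complex.exp (a * z)) ^ i *
    (fun _ => Complex.exp (a * w)) ^ (m - 1 - i), isExpPoly_sum _ _ fun i _ =>
      (isExpPoly_pow (isExpPoly_mono 1 a) _).mul' (isExpPoly_pow (isExpPoly_const _) _), ?_⟩
  funext z
  have := (Commute.all (Complex.exp (a * z)) (Complex.exp (a * w))).mul_geom_sum₂ m
  rw [← Complex.exp_nat_mul, ← Complex.exp_nat_mul] at this
  simp only [Pi.mul_apply, Finset.sum_apply, Pi.pow_apply, one_mul]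
  rw [this, mul_assoc, mul_assoc]

theorem dvd_int (a w : ℂ) (m : ℤ) : EDvd (fun z => Complex.exp (a * z) - Complex.exp (a * w))
    (fun z => Complex.exp (m * a * z) - Complex.exp (m * a * w)) := by
  obtain ⟨n, rfl | rfl⟩ := m.eq_nat_or_neg
  · exact dvd_nat a w n
  · have := (dvd_nat a w n).mul_right' (isExpPoly_mono (-Complex.exp (-(n * a * w))) (-(n * a)))
    convert this using 1
    funext z
    simp only [Pi.mul_apply, Int.cast_neg, Int.cast_natCast, neg_mul, Complex.exp_neg]
    have h1 := Complex.exp_ne_zero (n * a * z)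
    have h2 := Complex.exp_ne_zero (n * a * w)
    field_simp
    ring

theorem dvd_block {ι : Type*} (A : Finset ι) (lam mu : ι → ℂ) (a w : ℂ) (i0 : ι)
    (hm : ∀ i ∈ A, ∃ m : ℤ, mu i - mu i0 = m * a)
    (h0 : ∑ i ∈ A, lam i * Complex.exp (mu i * w) = 0) :
    EDvd (fun z => Complex.exp (a * z) - Complex.exp (a * w))
      (∑ i ∈ A, fun z => lam i * Complex.exp (mu i * z)) := by
  have h1 : (∑ i ∈ A, fun z => lam i * Complex.exp (mu i * z)) =
      ∑ i ∈ A, (fun z => Complex.exp ((mu i - mu i0) * z) - Complex.exp ((mu i - mu i0) * w)) *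
        (fun z => lam i * Complex.exp (mu i0 * z)) := by
    funext z
    rw [Finset.sum_apply, Finset.sum_apply, ← sub_eq_zero, ← Finset.sum_sub_distrib,
      ← mul_zero (Complex.exp (mu i0 * (z - w))), ← h0, Finset.mul_sum]
    refine Finset.sum_congr rfl fun i _ => ?_
    have e1 : Complex.exp (mu i * z) = Complex.exp ((mu i - mu i0) * z) * Complex.exp (mu i0 * z) := by
      rw [← Complex.exp_add]; congr 1; ring
    have e2 : Complex.exp (mu i0 * (z - w)) * Complex.exp (mu i * w) =
        Complex.exp ((mu i - mu i0) * w) * Complex.exp (mu i0 * z) := by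
      rw [← Complex.exp_add, ← Complex.exp_add]; congr 1; ring
    simp only [Pi.mul_apply]
    linear_combination lam i * e1 - lam i * e2
  rw [h1]
  refine EDvd.sum' _ _ _ fun i hi => EDvd.mul_right' ?_ (isExpPoly_mono _ _)
  obtain ⟨m, hm⟩ := hm i hi
  rw [hm]
  exact dvd_int a w m

theorem zeros_inf (a w : ℂ) (ha : a ≠ 0) : {z | Complex.exp (a * z) - Complex.exp (a * w) = 0}.Infinite := by
  have hinj : Function.Injective fun n : ℕ => w + n * (2 * Real.pi * I) / a := by
    intro n n' h
    have h1 := add_left_cancel h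
    rw [div_left_inj' ha] at h1
    exact_mod_cast mul_right_cancel₀ Complex.two_pi_I_ne_zero h1
  refine (Set.infinite_range_of_injective hinj).mono ?_
  rintro _ ⟨n, rfl⟩
  show Complex.exp (a * (w + n * (2 * Real.pi * I) / a)) - Complex.exp (a * w) = 0
  rw [sub_eq_zero, Complex.exp_eq_exp_iff_exists_int]
  exact ⟨n, by field_simp; push_cast; ring⟩

/-- the coprime case -/
theorem coprime_case (hSC : SchanuelConjecture) {k : ℕ} (ω : Fin k → ℂ) (hω : LinearIndependent ℚ ω)
    (P Q : MvPolynomial (Fin k) ℂ) (hPQ : IsRelPrime P Q) (f g : ℂ → ℂ)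
    (hfP : ∀ z, f z = MvPolynomial.eval (fun j => Complex.exp (ω j * z)) P)
    (hgQ : ∀ z, g z = MvPolynomial.eval (fun j => Complex.exp (ω j * z)) Q)
    (hf : IsExpPoly f) (hg : IsExpPoly g) (hinf : {z : ℂ | f z = 0 ∧ g z = 0}.Infinite) :
    ∃ h, IsExpPoly h ∧ EDvd h f ∧ EDvd h g ∧ {z : ℂ | h z = 0}.Infinite := by
  classical
  obtain ⟨N, l, m, hf⟩ := hf
  obtain ⟨N', l', m', hg⟩ := hg
  let ι := Fin N ⊕ Fin N'
  let lam : ι → ℂ := Sum.elim l l'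
  let mu : ι → ℂ := Sum.elim m m'
  let B1 : Finset ι := Finset.univ.map ⟨Sum.inl, Sum.inl_injective⟩
  let B2 : Finset ι := Finset.univ.map ⟨Sum.inr, Sum.inr_injective⟩
  have hf' : ∀ z, f z = ∑ i ∈ B1, lam i * Complex.exp (mu i * z) := fun z => by
    rw [hf, Finset.sum_map]; rfl
  have hg' : ∀ z, g z = ∑ i ∈ B2, lam i * Complex.exp (mu i * z) := fun z => by
    rw [hg, Finset.sum_map]; rfl
  have hB : ∀ i, i ∈ B1 ∨ i ∈ B2 := by
    rintro (i | i)
    · left; simp [B1]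
    · right; simp [B2]
  have hdisj : ∀ i ∈ B1, i ∉ B2 := by
    rintro (i | i) h1
    · simp [B2]
    · simp [B1] at h1
  have hpart : ∀ z : ℂ, ∃ p : ι → Finset ι, f z = 0 ∧ g z = 0 → ∀ i, i ∈ p i ∧
      (∀ B ∈ ({B1, B2} : Finset (Finset ι)), i ∈ B → p i ⊆ B) ∧
      MinZero (p i) (fun i => lam i * Complex.exp (mu i * z)) ∧ ∀ j ∈ p i, p j = p i := by
    intro z
    by_cases hz : f z = 0 ∧ g z = 0
    · obtain ⟨p1, hp1⟩ := partition_exists (fun i => lam i * Complex.exp (mu i * z)) _ B1 rfl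
        (by rw [← hf', hz.1])
      obtain ⟨p2, hp2⟩ := partition_exists (fun i => lam i * Complex.exp (mu i * z)) _ B2 rfl
        (by rw [← hg', hz.2])
      refine ⟨fun i => if i ∈ B1 then p1 i else p2 i, fun _ i => ?_⟩
      by_cases hi : i ∈ B1
      · obtain ⟨a1, a2, a3, a4⟩ := hp1 i hi
        simp only [if_pos hi]
        refine ⟨a1, fun B hB hiB => ?_, a3, fun j hj => ?_⟩
        · rw [Finset.mem_insert, Finset.mem_singleton] at hB
          rcases hB with rfl | rfl
          · exact a2
          · exact absurd hiB (hdisj i hi)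
        · simp only [if_pos (a2 hj)]
          exact a4 j hj
      · obtain ⟨a1, a2, a3, a4⟩ := hp2 i ((hB i).resolve_left hi)
        simp only [if_neg hi]
        refine ⟨a1, fun B hB hiB => ?_, a3, fun j hj => ?_⟩
        · rw [Finset.mem_insert, Finset.mem_singleton] at hB
          rcases hB with rfl | rfl
          · exact absurd hiB hi
          · exact a2
        · have : j ∉ B1 := fun h => hdisj j h (a2 hj)
          simp only [if_neg this]
          exact a4 j hj
    · exact ⟨fun _ => ∅, fun h => absurd h hz⟩
  choose part hpart using hpart
  obtain ⟨S, hSsub, hS, p, hp⟩ := exists_infinite_const hinf part (Set.toFinite _)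
  have hp' : ∀ z ∈ S, ∀ i, i ∈ p i ∧
      (∀ B ∈ ({B1, B2} : Finset (Finset ι)), i ∈ B → p i ⊆ B) ∧
      MinZero (p i) (fun i => lam i * Complex.exp (mu i * z)) ∧ ∀ j ∈ p i, p j = p i := by
    intro z hz
    rw [← hp z hz]
    exact hpart z (hSsub hz)
  obtain ⟨W, hW, hWz⟩ := step1 hSC ω hω P Q hPQ (Finset.univ.image lam ∪ Finset.univ.image mu)
  obtain ⟨w, hw⟩ := hS.nonempty
  obtain ⟨a, ha, hΔ⟩ := common_a hSC lam mu S hS W p (fun i => (hp' w hw i).1)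
    (fun k z hz => (hp' z hz k).2.2.1) (fun k i hi j hj z hz => by
      have hz' := hSsub hz
      refine hWz z (by rw [← hfP]; exact hz'.1) (by rw [← hgQ]; exact hz'.2) (p k) lam mu
        (fun i _ => by simp) (hp' z hz k).2.2.1 i hi j hj)
  have hdvd : ∀ B ∈ ({B1, B2} : Finset (Finset ι)),
      EDvd (fun z => Complex.exp (a * z) - Complex.exp (a * w))
        (∑ i ∈ B, fun z => lam i * Complex.exp (mu i * z)) := by
    intro B hB
    rw [← Finset.sum_fiberwise_of_maps_to (s := B) (t := B.image p) (g := p)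
      (fun i hi => Finset.mem_image_of_mem _ hi)]
    refine EDvd.sum' _ _ _ fun A hA => ?_
    rw [Finset.mem_image] at hA
    obtain ⟨i, hi, rfl⟩ := hA
    obtain ⟨b1, b2, b3, b4⟩ := hp' w hw i
    have : (B.filter fun j => p j = p i) = p i := by
      ext j
      rw [Finset.mem_filter]
      constructor
      · rintro ⟨_, h⟩
        rw [← h]
        exact (hp' w hw j).1
      · exact fun h => ⟨b2 B hB hi h, b4 j h⟩
    rw [this]
    exact dvd_block (p i) lam mu a w i (fun j hj => hΔ i j hj) b3.2.1
  refine ⟨fun z => Complex.exp (a * z) - Complex.exp (a * w), ?_, ?_, ?_, zeros_inf a w ha⟩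
  · have := (isExpPoly_mono 1 a).add' (isExpPoly_const (-Complex.exp (a * w)))
    convert this using 1
    funext z
    simp [sub_eq_add_neg]
  · have := hdvd B1 (by simp)
    convert this using 1
    funext z
    rw [hf', Finset.sum_apply]
  · have := hdvd B2 (by simp)
    convert this using 1
    funext z
    rw [hg', Finset.sum_apply]


/-- a basis for the lattice generated by finitely many exponents -/
theorem lattice_basis (M : Set ℂ) (hM : M.Finite) : ∃ (k : ℕ) (ω : Fin k → ℂ), LinearIndependent ℚ ω ∧
    ∀ μ ∈ M, ∃ n : Fin k → ℤ, μ = ∑ j, n j * ω j := by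
  let G : Submodule ℤ ℂ := Submodule.span ℤ M
  haveI : Module.Finite ℤ G := Module.Finite.iff_fg.2 (Submodule.fg_span hM)
  haveI : Module.Free ℤ G := inferInstance
  let b : Module.Basis (Fin (Module.finrank ℤ G)) ℤ G := Module.finBasis ℤ G
  refine ⟨_, fun j => (b j : ℂ), ?_, fun μ hμ => ?_⟩
  · rw [← LinearIndependent.iff_fractionRing ℤ ℚ]
    exact b.linearIndependent.map' G.subtype (Submodule.ker_subtype G)
  · let x : G := ⟨μ, Submodule.subset_span hμ⟩
    refine ⟨fun j => b.repr x j, ?_⟩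
    have := congrArg (Subtype.val) (b.sum_repr x)
    rw [Submodule.coe_sum] at this
    simp only [Submodule.coe_smul, zsmul_eq_mul] at this
    exact this.symm

/-- an exponential sum with exponents in the lattice is a polynomial times a unit -/
theorem poly_repr {k N : ℕ} (ω : Fin k → ℂ) (lam mu : Fin N → ℂ)
    (hmu : ∀ i, ∃ n : Fin k → ℤ, mu i = ∑ j, n j * ω j) :
    ∃ (P : MvPolynomial (Fin k) ℂ) (κ : ℂ), ∀ z, ∑ i, lam i * Complex.exp (mu i * z) =
      MvPolynomial.eval (fun j => Complex.exp (ω j * z)) P * Complex.exp (κ * z) := by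
  classical
  choose n hn using hmu
  let K : ℕ := ∑ i, ∑ j, (n i j).natAbs
  have hK : ∀ i j, ∃ e : ℕ, (e : ℤ) = n i j + K := by
    intro i j
    have h1 : (n i j).natAbs ≤ K :=
      (Finset.single_le_sum (f := fun j => (n i j).natAbs) (fun _ _ => Nat.zero_le _)
        (Finset.mem_univ j)).trans
      (Finset.single_le_sum (f := fun i => ∑ j, (n i j).natAbs) (fun _ _ => Nat.zero_le _)
        (Finset.mem_univ i))
    exact ⟨(n i j + K).toNat, Int.toNat_of_nonneg (by omega)⟩
  choose e he using hK
  refine ⟨∑ i, MvPolynomial.C (lam i) * ∏ j, MvPolynomial.X j ^ e i j, -(K * ∑ j, ω j), fun z => ?_⟩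
  rw [map_sum, Finset.sum_mul]
  refine Finset.sum_congr rfl fun i _ => ?_
  rw [map_mul, MvPolynomial.eval_C, map_prod, mul_assoc]
  congr 1
  have h1 : ∀ j, MvPolynomial.eval (fun j => Complex.exp (ω j * z)) (MvPolynomial.X j ^ e i j) =
      Complex.exp (e i j * (ω j * z)) := fun j => by
    rw [map_pow, MvPolynomial.eval_X, ← Complex.exp_nat_mul]
  simp_rw [h1]
  rw [← Complex.exp_sum, ← Complex.exp_add]
  congr 1
  have h2 : ∀ j, (e i j : ℂ) = n i j + K := fun j => by exact_mod_cast congrArg (Int.cast : ℤ → ℂ) (he i j)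
  simp_rw [h2]
  rw [hn i, Finset.mul_sum, Finset.sum_mul, ← Finset.sum_neg_distrib, Finset.sum_mul,
    ← Finset.sum_add_distrib]
  refine Finset.sum_congr rfl fun j _ => ?_
  ring

theorem isExpPoly_eval {k : ℕ} (ω : Fin k → ℂ) (P : MvPolynomial (Fin k) ℂ) :
    IsExpPoly (fun z => MvPolynomial.eval (fun j => Complex.exp (ω j * z)) P) := by
  induction P using MvPolynomial.induction_on with
  | C a => simpa only [MvPolynomial.eval_C] using isExpPoly_const a
  | add p q hp hq =>
    simp only [map_add]
    exact hp.add' hq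
  | mul_X p j hp =>
    simp only [map_mul, MvPolynomial.eval_X]
    have := hp.mul' (isExpPoly_mono 1 (ω j))
    convert this using 1
    funext z
    simp

/-- **Shapiro's Conjecture** (assuming Schanuel's Conjecture): if two exponential
polynomials have infinitely many common zeros, they have a common divisor in `𝓔`
with infinitely many zeros. -/
theorem shapiro_conjecture (hSC : SchanuelConjecture)
    (f g : ℂ → ℂ) (hf : IsExpPoly f) (hg : IsExpPoly g)
    (hinf : {z : ℂ | f z = 0 ∧ g z = 0}.Infinite) :
    ∃ h : ℂ → ℂ, IsExpPoly h ∧ EDvd h f ∧ EDvd h g ∧ {z : ℂ | h z = 0}.Infinite := by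
  obtain ⟨N, l, m, hf'⟩ := id hf
  obtain ⟨N', l', m', hg'⟩ := id hg
  obtain ⟨k, ω, hω, hmu⟩ := lattice_basis (Set.range m ∪ Set.range m')
    ((Set.finite_range m).union (Set.finite_range m'))
  obtain ⟨P, κ, hP⟩ := poly_repr ω l m fun i => hmu _ (Or.inl ⟨i, rfl⟩)
  obtain ⟨Q, κ', hQ⟩ := poly_repr ω l' m' fun i => hmu _ (Or.inr ⟨i, rfl⟩)
  by_cases hP0 : P = 0
  · have hf0 : f = 0 := by
      funext z
      rw [hf', hP, hP0, map_zero, zero_mul]; rfl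
    refine ⟨g, hg, ⟨0, isExpPoly_const 0, by rw [hf0, mul_zero]⟩, ⟨1, isExpPoly_const 1, by rw [mul_one]⟩,
      hinf.mono fun z hz => hz.2⟩
  obtain ⟨P', Q', D, hrel, hDP, hDQ⟩ := UniqueFactorizationMonoid.exists_reduced_factors P hP0 Q
  let ev : MvPolynomial (Fin k) ℂ → ℂ → ℂ := fun R z =>
    MvPolynomial.eval (fun j => Complex.exp (ω j * z)) R
  have hev : ∀ R, IsExpPoly (ev R) := isExpPoly_eval ω
  have hfe : f = ev D * (ev P' * fun z => 1 * Complex.exp (κ * z)) := by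
    funext z
    rw [hf', hP, ← hDP, map_mul]
    simp only [Pi.mul_apply, ev]
    ring
  have hge : g = ev D * (ev Q' * fun z => 1 * Complex.exp (κ' * z)) := by
    funext z
    rw [hg', hQ, ← hDQ, map_mul]
    simp only [Pi.mul_apply, ev]
    ring
  by_cases hD : {z : ℂ | ev D z = 0}.Infinite
  · exact ⟨ev D, hev D, ⟨_, (hev P').mul' (isExpPoly_mono 1 κ), hfe⟩,
      ⟨_, (hev Q').mul' (isExpPoly_mono 1 κ'), hge⟩, hD⟩
  rw [Set.not_infinite] at hD
  have hinf' : {z : ℂ | ev P' z = 0 ∧ ev Q' z = 0}.Infinite := by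
    refine (hinf.diff hD).mono ?_
    rintro z ⟨⟨h1, h2⟩, h3⟩
    have h3' : ev D z ≠ 0 := h3
    rw [hfe] at h1
    rw [hge] at h2
    simpa [h3', Complex.exp_ne_zero] using And.intro h1 h2
  obtain ⟨h, hh, hhf, hhg, hhi⟩ := coprime_case hSC ω hω P' Q' hrel (ev P') (ev Q') (fun _ => rfl)
    (fun _ => rfl) (hev P') (hev Q') hinf'
  refine ⟨h, hh, ?_, ?_, hhi⟩
  · rw [hfe, mul_left_comm]
    exact hhf.mul_right' ((hev D).mul' (isExpPoly_mono 1 κ))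
  · rw [hge, mul_left_comm]
    exact hhg.mul_right' ((hev D).mul' (isExpPoly_mono 1 κ'))
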